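/- arXiv:1804.08211 — 9 statements merged into one kernel-verified Lean document; each statement's English description precedes it below -/
import Mathlib

section
/- For every finite abstract simplicial complex G, the connection matrix L of G is unimodular: det(L) = 1 or det(L) = -1. -/
/-- The connection matrix of a finite abstract simplicial complex `G`:
`L x y = 1` if `x ∩ y ≠ ∅` and `L x y = 0` otherwise. -/
def connectionMatrixZ {V : Type} [DecidableEq V] (G : Finset (Finset V)) :
    Matrix G G ℤ :=
  Matrix.of fun x y => if ((x : Finset V) ∩ (y : Finset V)).Nonempty then 1 else 0

/-!
The Euler characteristic of a nonempty full simplex is `1`, so the sum of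
`(-1) ^ dim z = -(-1) ^ |z|` over the nonempty `z ⊆ x ∩ y` is `1` or `0` according to whether `x`
and `y` meet. All these `z` are faces of `G`, so the entries of the connection matrix `L` are sums
over common lower bounds in the face poset: `L = ζᵀ D ζ` with `D = diag ((-1) ^ dim z)` and `ζ` the
zeta matrix. Along any linear extension of the poset `ζ` is unitriangular, hence
`det L = det D = ±1`.
-/

theorem det_of_blockTriangular_of_injective {m β R : Type*} [Fintype m] [DecidableEq m]
    [LinearOrder β] [CommRing R] {M : Matrix m m R} {b : m → β} (hM : M.BlockTriangular b)
    (hb : b.Injective) : M.det = ∏ i, M i i := by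
  let : LinearOrder m := LinearOrder.lift' b hb
  exact Matrix.det_of_isUpperTriangular (M := M) hM

section Poset

open IncidenceAlgebra Matrix

variable {α R : Type*} [Fintype α] [DecidableEq α]

theorem det_of_incidenceAlgebra [PartialOrder α] [CommRing R] (f : IncidenceAlgebra R α) :
    (of fun a b => f a b).det = ∏ a, f a a := by
  have blockTriangular : BlockTriangular (of fun a b => f a b) toLinearExtension := fun _ _ hlt =>
    apply_eq_zero_of_not_le (fun hle => hlt.not_ge (toLinearExtension.monotone hle)) f
  exact det_of_blockTriangular_of_injective blockTriangular Function.injective_id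

theorem of_sum_common_lower_bounds_eq_zeta_mul_diagonal_mul_zeta [LE α] [DecidableLE α]
    [NonAssocSemiring R] (w : α → R) :
    (of fun a b => ∑ c with c ≤ a ∧ c ≤ b, w c) =
      (of fun a b => zeta R a b)ᵀ * diagonal w * of fun a b => zeta R a b := by
  ext a b
  rw [of_apply, Finset.sum_filter, Matrix.mul_apply]
  refine Finset.sum_congr rfl fun c _ => ?_
  by_cases hca : c ≤ a <;> simp [mul_diagonal, hca]

/-- The Lindström–Wilf determinant formula. -/
theorem det_of_sum_common_lower_bounds [PartialOrder α] [DecidableLE α] [CommRing R] (w : α → R) :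
    (of fun a b => ∑ c with c ≤ a ∧ c ≤ b, w c).det = ∏ c, w c := by
  have det_zeta : (of fun a b : α => zeta R a b).det = 1 := by
    rw [det_of_incidenceAlgebra]
    exact Finset.prod_eq_one fun a _ => zeta_of_le le_rfl
  rw [of_sum_common_lower_bounds_eq_zeta_mul_diagonal_mul_zeta, det_mul, det_mul, det_transpose,
    det_zeta, det_diagonal, one_mul, mul_one]

end Poset

theorem sum_powerset_erase_empty_neg_neg_one_pow_card {V : Type*} [DecidableEq V]
    (s : Finset V) :
    ∑ z ∈ s.powerset.erase ∅, -(-1 : ℤ) ^ z.card = if s.Nonempty then 1 else 0 := by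
  rw [Finset.sum_erase_eq_sub s.empty_mem_powerset, Finset.sum_neg_distrib,
    Finset.sum_powerset_neg_one_pow_card]
  rcases s.eq_empty_or_nonempty with rfl | hs
  · simp
  · simp [hs, hs.ne_empty]

theorem sum_common_faces {V M : Type*} [DecidableEq V] [AddCommMonoid M]
    {G : Finset (Finset V)} (hne : ∀ x ∈ G, x ≠ ∅)
    (hsub : ∀ x ∈ G, ∀ y : Finset V, y ⊆ x → y ≠ ∅ → y ∈ G) (f : Finset V → M) (x y : G) :
    ∑ z : G with z ≤ x ∧ z ≤ y, f z = ∑ z ∈ ((x : Finset V) ∩ y).powerset.erase ∅, f z := by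
  have filter_eq : G.filter (fun z => z ⊆ (x : Finset V) ∧ z ⊆ (y : Finset V)) =
      ((x : Finset V) ∩ y).powerset.erase ∅ := by
    ext z
    simp only [Finset.mem_filter, Finset.mem_erase, Finset.mem_powerset, Finset.subset_inter_iff]
    exact ⟨fun ⟨hz, hzxy⟩ => ⟨hne z hz, hzxy⟩, fun ⟨hz, hzxy⟩ => ⟨hsub x x.2 z hzxy.1 hz, hzxy⟩⟩
  rw [← filter_eq, Finset.sum_filter, Finset.sum_filter, ← Finset.sum_coe_sort G]
  rfl

section ConnectionMatrix

variable {V : Type} [DecidableEq V] {G : Finset (Finset V)}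

theorem connectionMatrixZ_eq_of_sum_common_faces (hne : ∀ x ∈ G, x ≠ ∅)
    (hsub : ∀ x ∈ G, ∀ y : Finset V, y ⊆ x → y ≠ ∅ → y ∈ G) :
    connectionMatrixZ G =
      Matrix.of fun x y => ∑ z : G with z ≤ x ∧ z ≤ y, -(-1 : ℤ) ^ (z : Finset V).card := by
  ext x y
  rw [Matrix.of_apply, sum_common_faces hne hsub (fun z => -(-1 : ℤ) ^ z.card),
    sum_powerset_erase_empty_neg_neg_one_pow_card, connectionMatrixZ, Matrix.of_apply]

theorem det_connectionMatrixZ (hne : ∀ x ∈ G, x ≠ ∅)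
    (hsub : ∀ x ∈ G, ∀ y : Finset V, y ⊆ x → y ≠ ∅ → y ∈ G) :
    (connectionMatrixZ G).det = ∏ x : G, -(-1 : ℤ) ^ (x : Finset V).card := by
  rw [connectionMatrixZ_eq_of_sum_common_faces hne hsub, det_of_sum_common_lower_bounds]

end ConnectionMatrix

/-- **Unimodularity theorem**: the connection matrix of a finite abstract simplicial
complex has determinant `1` or `-1`. -/
theorem connection_matrix_unimodular {V : Type} [DecidableEq V]
    (G : Finset (Finset V))
    (hne : ∀ x ∈ G, x ≠ ∅)
    (hsub : ∀ x ∈ G, ∀ y : Finset V, y ⊆ x → y ≠ ∅ → y ∈ G) :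
    (connectionMatrixZ G).det = 1 ∨ (connectionMatrixZ G).det = -1 := by
  rw [← Int.isUnit_iff, det_connectionMatrixZ hne hsub]
  exact IsUnit.prod_univ_iff.mpr fun _ => (isUnit_one.neg.pow _).neg
end

section
/- For every finite abstract simplicial complex G, the sum of all matrix entries of the inverse g = L⁻¹ of the connection matrix equals the Euler characteristic: Σ_{x∈G} Σ_{y∈G} g(x,y) = χ(G). -/
/-!
Write `ω x = (-1) ^ (|x| - 1)`, `D = diag ω`, and let `Z x y = [x ⊆ y]` be the zeta matrix of `G`
ordered by inclusion, which is invertible by Möbius inversion. The nonempty subsets of a finite set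
`s` have `ω`-sum `1` if `s ≠ ∅` and `0` if `s = ∅`. For `s = x ∩ y` this is the factorisation
`L = Zᵀ D Z`, and for `s = x` it is `ω Z = 1`, that is, `1 Z⁻¹ = ω`. The entries of
`L⁻¹ = Z⁻¹ D⁻¹ (Zᵀ)⁻¹` therefore add up to `⟨ω, D⁻¹ ω⟩ = ⟨ω, 1⟩ = χ(G)`.
-/

/-- The connection matrix (over `ℚ`) of a finite abstract simplicial complex `G`:
`L x y = 1` if `x ∩ y ≠ ∅` and `L x y = 0` otherwise. -/
def connectionMatrix {V : Type} [DecidableEq V] (G : Finset (Finset V)) :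
    Matrix G G ℚ :=
  Matrix.of fun x y => if ((x : Finset V) ∩ (y : Finset V)).Nonempty then 1 else 0

open Matrix

section SumInverse

variable {n R : Type*} [Fintype n] [DecidableEq n] [CommRing R]

lemma vecMul_inv_eq_of_vecMul_eq {Z : Matrix n n R} (hZ : IsUnit Z) {v w : n → R}
    (h : v ᵥ* Z = w) : w ᵥ* Z⁻¹ = v := by
  rw [← h, vecMul_vecMul, mul_nonsing_inv Z ((isUnit_iff_isUnit_det Z).1 hZ), vecMul_one]

lemma inv_diagonal_mulVec_self {d : n → R} (hd : ∀ i, IsUnit (d i)) :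
    (diagonal d)⁻¹ *ᵥ d = 1 := by
  have hD : IsUnit (diagonal d).det :=
    (isUnit_iff_isUnit_det _).1 (isUnit_diagonal.2 (Pi.isUnit_iff.2 hd))
  have hd_one : diagonal d *ᵥ 1 = d := by
    funext i
    rw [mulVec_diagonal, Pi.one_apply, mul_one]
  calc (diagonal d)⁻¹ *ᵥ d = (diagonal d)⁻¹ *ᵥ (diagonal d *ᵥ 1) := by rw [hd_one]
    _ = 1 := by rw [mulVec_mulVec, nonsing_inv_mul _ hD, one_mulVec]

theorem sum_inv_transpose_mul_diagonal_mul {Z : Matrix n n R} {d : n → R} (hZ : IsUnit Z)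
    (hd : ∀ i, IsUnit (d i)) (hdZ : d ᵥ* Z = 1) :
    ∑ i, ∑ j, (Zᵀ * diagonal d * Z)⁻¹ i j = ∑ i, d i := by
  have hZ_inv : 1 ᵥ* Z⁻¹ = d := vecMul_inv_eq_of_vecMul_eq hZ hdZ
  have hZT_inv : Z⁻¹ᵀ *ᵥ 1 = d := by rw [mulVec_transpose, hZ_inv]
  calc ∑ i, ∑ j, (Zᵀ * diagonal d * Z)⁻¹ i j
      = 1 ⬝ᵥ ((Zᵀ * diagonal d * Z)⁻¹ *ᵥ 1) := by
        simp only [one_dotProduct, mulVec, dotProduct_one]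
    _ = (1 ᵥ* Z⁻¹) ⬝ᵥ ((diagonal d)⁻¹ *ᵥ (Z⁻¹ᵀ *ᵥ 1)) := by
        simp only [Matrix.mul_inv_rev, transpose_nonsing_inv, dotProduct_mulVec, vecMul_vecMul,
          Matrix.mul_assoc]
    _ = d ⬝ᵥ 1 := by rw [hZ_inv, hZT_inv, inv_diagonal_mulVec_self hd]
    _ = ∑ i, d i := dotProduct_one d

end SumInverse

section Zeta

/-- The matrix of the zeta function of an order, whose entry at `(x, y)` is `1` if `x ≤ y` and `0`
otherwise. For a set system ordered by inclusion it is the incidence matrix of its members. -/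
def zetaMatrix (α R : Type*) [LE α] [DecidableLE α] [Zero R] [One R] : Matrix α α R :=
  Matrix.of fun x y => if x ≤ y then 1 else 0

section Entries

variable {α R : Type*} [LE α] [DecidableLE α] [Fintype α]

lemma vecMul_zetaMatrix_apply [NonAssocSemiring R] (f : α → R) (y : α) :
    (f ᵥ* zetaMatrix α R) y = ∑ z with z ≤ y, f z := by
  simp only [vecMul, dotProduct, zetaMatrix, of_apply, mul_boole, Finset.sum_filter]

lemma zetaMatrix_transpose_mul_diagonal_mul_apply [DecidableEq α] [Semiring R] (f : α → R)
    (x y : α) :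
    ((zetaMatrix α R)ᵀ * diagonal f * zetaMatrix α R) x y = ∑ z with z ≤ x ∧ z ≤ y, f z := by
  rw [mul_apply_eq_vecMul, vecMul_zetaMatrix_apply]
  simp only [mul_diagonal, transpose_apply, zetaMatrix, of_apply, boole_mul, ← Finset.sum_filter,
    Finset.filter_filter, and_comm]

end Entries

theorem isUnit_zetaMatrix (α R : Type*) [PartialOrder α] [DecidableLE α] [Fintype α]
    [DecidableEq α] [CommRing R] : IsUnit (zetaMatrix α R) := by
  classical
  let : LocallyFiniteOrder α := Fintype.toLocallyFiniteOrder
  let μ : Matrix α α R := Matrix.of fun x y => IncidenceAlgebra.mu R x y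
  suffices hμ : μ * zetaMatrix α R = 1 from .of_mul_eq_one_right _ hμ
  ext x y
  calc (μ * zetaMatrix α R) x y
      = ∑ z with z ≤ y, IncidenceAlgebra.mu R x z := by
        rw [mul_apply_eq_vecMul, vecMul_zetaMatrix_apply]
        rfl
    _ = ∑ z ∈ Finset.Icc x y, IncidenceAlgebra.mu R x z := by
        refine (Finset.sum_subset (fun z hz => ?_) fun z hzy hz => ?_).symm
        · exact Finset.mem_filter.2 ⟨Finset.mem_univ z, (Finset.mem_Icc.1 hz).2⟩
        · exact IncidenceAlgebra.apply_eq_zero_of_not_le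
            (fun hxz => hz (Finset.mem_Icc.2 ⟨hxz, (Finset.mem_filter.1 hzy).2⟩)) _
    _ = (1 : Matrix α α R) x y := by rw [IncidenceAlgebra.sum_Icc_mu_right, one_apply]

end Zeta

section EulerCharacteristic

/-- The sign `ω(x) = (-1) ^ dim x` of a simplex, where `dim x = |x| - 1`. The truncated subtraction
gives the empty set the sign `1`. -/
def simplexSign {V : Type*} (R : Type*) [Ring R] (x : Finset V) : R :=
  (-1) ^ (x.card - 1)

variable {V R : Type*} [Ring R]

lemma isUnit_simplexSign (x : Finset V) : IsUnit (simplexSign R x) :=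
  isUnit_one.neg.pow _

lemma simplexSign_eq_neg {x : Finset V} (hx : x ≠ ∅) :
    simplexSign R x = -(-1) ^ x.card := by
  rw [simplexSign, ← mul_pow_sub_one (Finset.card_ne_zero.2 (Finset.nonempty_iff_ne_empty.2 hx)),
    neg_one_mul, neg_neg]

variable [DecidableEq V]

lemma sum_simplexSign_powerset_erase_empty (s : Finset V) :
    ∑ x ∈ s.powerset.erase ∅, simplexSign R x = if s.Nonempty then 1 else 0 := by
  have halternating : ∑ x ∈ s.powerset, (-1 : R) ^ x.card = if s = ∅ then 1 else 0 := by
    exact_mod_cast congrArg (Int.cast : ℤ → R) (Finset.sum_powerset_neg_one_pow_card (x := s))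
  calc ∑ x ∈ s.powerset.erase ∅, simplexSign R x
      = -∑ x ∈ s.powerset.erase ∅, (-1) ^ x.card := by
        rw [← Finset.sum_neg_distrib]
        exact Finset.sum_congr rfl fun x hx => simplexSign_eq_neg (Finset.ne_of_mem_erase hx)
    _ = 1 - ∑ x ∈ s.powerset, (-1) ^ x.card := by
        rw [← Finset.add_sum_erase _ _ (Finset.empty_mem_powerset s), Finset.card_empty, pow_zero,
          sub_add_cancel_left]
    _ = if s.Nonempty then 1 else 0 := by
        rcases s.eq_empty_or_nonempty with rfl | hs
        · simp
        · simp [halternating, hs, hs.ne_empty]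

variable {G : Finset (Finset V)}

lemma filter_subset_eq_powerset_erase_empty (hne : ∀ x ∈ G, x ≠ ∅) {s : Finset V}
    (hs : ∀ y ⊆ s, y ≠ ∅ → y ∈ G) : G.filter (· ⊆ s) = s.powerset.erase ∅ := by
  ext y
  simp only [Finset.mem_filter, Finset.mem_erase, Finset.mem_powerset]
  exact ⟨fun h => ⟨hne y h.1, h.2⟩, fun h => ⟨hs y h.2 h.1, h.2⟩⟩

lemma sum_simplexSign_subset (hne : ∀ x ∈ G, x ≠ ∅) {s : Finset V}
    (hs : ∀ y ⊆ s, y ≠ ∅ → y ∈ G) :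
    ∑ x : G with x.1 ⊆ s, simplexSign R x.1 = if s.Nonempty then 1 else 0 := by
  rw [Finset.sum_filter, Finset.sum_coe_sort G fun x => if x ⊆ s then simplexSign R x else 0,
    ← Finset.sum_filter, filter_subset_eq_powerset_erase_empty hne hs,
    sum_simplexSign_powerset_erase_empty]

lemma simplexSign_vecMul_zetaMatrix (hne : ∀ x ∈ G, x ≠ ∅)
    (hsub : ∀ x ∈ G, ∀ y : Finset V, y ⊆ x → y ≠ ∅ → y ∈ G) :
    (fun x : G => simplexSign R x.1) ᵥ* zetaMatrix G R = 1 := by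
  funext x
  have hx : (x : Finset V).Nonempty := Finset.nonempty_iff_ne_empty.2 (hne x x.2)
  exact (vecMul_zetaMatrix_apply _ x).trans
    ((sum_simplexSign_subset hne (hsub x x.2)).trans (if_pos hx))

end EulerCharacteristic

lemma connectionMatrix_eq_transpose_mul_diagonal_mul {V : Type} [DecidableEq V]
    {G : Finset (Finset V)} (hne : ∀ x ∈ G, x ≠ ∅)
    (hsub : ∀ x ∈ G, ∀ y : Finset V, y ⊆ x → y ≠ ∅ → y ∈ G) :
    connectionMatrix G =
      (zetaMatrix G ℚ)ᵀ * diagonal (fun x : G => simplexSign ℚ x.1) * zetaMatrix G ℚ := by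
  ext x y
  have hsubsets_inter : ∀ z ⊆ (x ∩ y : Finset V), z ≠ ∅ → z ∈ G :=
    fun z hz => hsub x x.2 z (hz.trans Finset.inter_subset_left)
  rw [zetaMatrix_transpose_mul_diagonal_mul_apply, connectionMatrix, of_apply,
    ← sum_simplexSign_subset hne hsubsets_inter]
  simp only [Finset.subset_inter_iff, ← Subtype.coe_le_coe]

/-- **Energy theorem**: the sum of all entries of the inverse of the connection
matrix of a finite abstract simplicial complex equals its Euler characteristic. -/
theorem energy_theorem {V : Type} [DecidableEq V]
    (G : Finset (Finset V))
    (hne : ∀ x ∈ G, x ≠ ∅)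
    (hsub : ∀ x ∈ G, ∀ y : Finset V, y ⊆ x → y ≠ ∅ → y ∈ G) :
    ∑ x : G, ∑ y : G, (connectionMatrix G)⁻¹ x y
      = ∑ x ∈ G, (-1 : ℚ) ^ (x.card - 1) := by
  calc ∑ x : G, ∑ y : G, (connectionMatrix G)⁻¹ x y
      = ∑ x : G, simplexSign ℚ x.1 := by
        rw [connectionMatrix_eq_transpose_mul_diagonal_mul hne hsub]
        exact sum_inv_transpose_mul_diagonal_mul (isUnit_zetaMatrix G ℚ)
          (fun x => isUnit_simplexSign x.1) (simplexSign_vecMul_zetaMatrix hne hsub)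
    _ = ∑ x ∈ G, (-1 : ℚ) ^ (x.card - 1) := Finset.sum_coe_sort G (simplexSign ℚ)
end

section
/- For every finite abstract simplicial complex G, the number p(G) of positive eigenvalues of the connection matrix L minus the number n(G) of negative eigenvalues of L (counted with multiplicity) equals the Euler characteristic: χ(G) = p(G) - n(G). -/
/-!
Let `ζ z x = 1` if `z ⊆ x` and `0` otherwise, and let `ω z = (-1) ^ (|z| - 1)`. The `(x, y)` entry
of `ζᵀ * diagonal ω * ζ` is the sum of `ω` over the simplices contained in `x ∩ y`. As every
nonempty subset of a simplex is a simplex, this is the Euler characteristic of a full simplex, that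
is `1`, if `x ∩ y` is nonempty, and an empty sum otherwise; hence the product is the connection
matrix `L`. By Möbius inversion `ζ` is invertible, so `L` is congruent to `diagonal ω`, and by the
spectral theorem it is also congruent to the diagonal matrix of its eigenvalues. By Sylvester's law
of inertia both diagonals have the same signature, and the signature of the signs `ω` is their sum.
-/

/-- The connection matrix (over `ℝ`) of a finite abstract simplicial complex `G`:
`L x y = 1` if `x ∩ y ≠ ∅` and `L x y = 0` otherwise. -/
def connectionMatrixR {V : Type} [DecidableEq V] (G : Finset (Finset V)) :
    Matrix G G ℝ :=
  Matrix.of fun x y => if ((x : Finset V) ∩ (y : Finset V)).Nonempty then 1 else 0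

open Finset Matrix
open IncidenceAlgebra (zeta mu mu_mul_zeta zeta_mul_mu)

section Signature

/-- The signature of a quadratic form as a single integer: positive minus negative index of
inertia. -/
noncomputable def signature {R M : Type*} [CommRing R] [LinearOrder R] [AddCommGroup M] [Module R M]
    (Q : QuadraticForm R M) : ℤ :=
  sigPos Q - sigNeg Q

lemma sign_neg_one_pow {R : Type*} [Ring R] [LinearOrder R] [IsStrictOrderedRing R] (k : ℕ) :
    (SignType.sign ((-1 : R) ^ k) : ℤ) = (-1) ^ k := by
  simp [sign_pow]

lemma sum_sign_eq_card_pos_sub_card_neg {ι R : Type*} [Zero R] [LinearOrder R] (s : Finset ι)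
    (w : ι → R) :
    ∑ i ∈ s, (SignType.sign (w i) : ℤ) = #{i ∈ s | 0 < w i} - #{i ∈ s | w i < 0} := by
  simp only [card_filter, Nat.cast_sum, ← sum_sub_distrib]
  refine sum_congr rfl fun i _ => ?_
  rcases lt_trichotomy (w i) 0 with h | h | h <;> simp [h, h.not_gt]

lemma signature_eq_sum_sign_of_equivalent {ι K M : Type*} [Fintype ι] [Field K] [LinearOrder K]
    [IsStrictOrderedRing K] [AddCommGroup M] [Module K M] {Q : QuadraticForm K M} {w : ι → K}
    (h : Q.Equivalent (QuadraticMap.weightedSumSquares K w)) :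
    signature Q = ∑ i, (SignType.sign (w i) : ℤ) := by
  simp only [signature, QuadraticForm.sigPos_of_equiv_weightedSumSquares h,
    QuadraticForm.sigNeg_of_equiv_weightedSumSquares h, sum_sign_eq_card_pos_sub_card_neg,
    Set.ncard_eq_toFinset_card', Set.toFinset_ofPred]

end Signature

section Congruence

variable {n R : Type*} [Fintype n] [DecidableEq n] [CommRing R]

lemma toQuadraticForm'_apply (A : Matrix n n R) (v : n → R) :
    A.toQuadraticForm' v = v ⬝ᵥ A *ᵥ v := by
  simp [Matrix.toQuadraticForm', Matrix.toLinearMap₂'_apply']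

lemma toQuadraticForm'_diagonal (w : n → R) :
    (diagonal w).toQuadraticForm' = QuadraticMap.weightedSumSquares R w := by
  ext v
  simp only [toQuadraticForm'_apply, QuadraticMap.weightedSumSquares_apply, dotProduct,
    mulVec_diagonal, smul_eq_mul, mul_left_comm]

lemma toQuadraticForm'_congr_equivalent (A : Matrix n n R) {P : Matrix n n R} (hP : IsUnit P) :
    (Pᵀ * A * P).toQuadraticForm'.Equivalent A.toQuadraticForm' := by
  have := hP.invertible
  refine ⟨⟨P.toLinearEquiv' this, fun v => ?_⟩⟩
  calc A.toQuadraticForm' (P *ᵥ v)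
    _ = (P *ᵥ v) ⬝ᵥ A *ᵥ P *ᵥ v := toQuadraticForm'_apply A _
    _ = v ⬝ᵥ (Pᵀ * A * P) *ᵥ v := by
      rw [← mulVec_mulVec, ← mulVec_mulVec, dotProduct_mulVec v, vecMul_transpose]
    _ = (Pᵀ * A * P).toQuadraticForm' v := (toQuadraticForm'_apply _ v).symm

lemma signature_toQuadraticForm'_congr_diagonal {K : Type*} [Field K] [LinearOrder K]
    [IsStrictOrderedRing K] {P : Matrix n n K} (hP : IsUnit P) (w : n → K) :
    signature (Pᵀ * diagonal w * P).toQuadraticForm' = ∑ i, (SignType.sign (w i) : ℤ) := by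
  apply signature_eq_sum_sign_of_equivalent
  rw [← toQuadraticForm'_diagonal]
  exact toQuadraticForm'_congr_equivalent _ hP

lemma signature_toQuadraticForm'_eq_sum_sign_eigenvalues {A : Matrix n n ℝ} (hA : A.IsHermitian) :
    signature A.toQuadraticForm' = ∑ i, (SignType.sign (hA.eigenvalues i) : ℤ) := by
  let P : Matrix n n ℝ := star (hA.eigenvectorUnitary : Matrix n n ℝ)
  have hP : IsUnit P := (Unitary.toUnits (star hA.eigenvectorUnitary)).isUnit
  have hPA : A = Pᵀ * diagonal hA.eigenvalues * P := by
    simpa [P, Unitary.conjStarAlgAut_apply, star_eq_conjTranspose, Function.comp_def]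
      using hA.spectral_theorem
  conv_lhs => rw [hPA]
  exact signature_toQuadraticForm'_congr_diagonal hP _

end Congruence

section IncidenceMatrix

variable {α R : Type*} [DecidableEq α]

/-- The matrix representation of the incidence algebra of a finite preorder `α`: an element is sent
to its table of values, extended by `0` off the order relation. -/
def incidenceMatrix [Fintype α] [Preorder α] [LocallyFiniteOrder α] [Semiring R] :
    IncidenceAlgebra R α →+* Matrix α α R where
  toFun f := Matrix.of f
  map_zero' := rfl
  map_one' := by
    ext x y
    simp [Matrix.one_apply]
  map_add' _ _ := rfl
  map_mul' f g := by
    ext x y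
    refine sum_subset (subset_univ _) fun z _ hz => ?_
    rw [Finset.mem_Icc, not_and_or] at hz
    rcases hz with hz | hz
    · rw [f.apply_eq_zero_of_not_le hz, zero_mul]
    · rw [g.apply_eq_zero_of_not_le hz, mul_zero]

lemma incidenceMatrix_apply [Fintype α] [Preorder α] [LocallyFiniteOrder α] [Semiring R]
    (f : IncidenceAlgebra R α) (x y : α) : incidenceMatrix f x y = f x y :=
  rfl

lemma isUnit_zeta [PartialOrder α] [LocallyFiniteOrder α] [DecidableLE α] [Ring R] :
    IsUnit (zeta R : IncidenceAlgebra R α) :=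
  ⟨⟨zeta R, mu R, zeta_mul_mu, mu_mul_zeta R α⟩, rfl⟩

lemma incidenceMatrix_zeta_congr_diagonal_apply [Fintype α] [Preorder α] [LocallyFiniteOrder α]
    [DecidableLE α] [Semiring R] (w : α → R) (x y : α) :
    ((incidenceMatrix (zeta R))ᵀ * diagonal w * incidenceMatrix (zeta R) : Matrix α α R) x y =
      ∑ z with z ≤ x ∧ z ≤ y, w z := by
  rw [Matrix.mul_apply]
  simp only [mul_diagonal, transpose_apply, incidenceMatrix_apply, IncidenceAlgebra.zeta_apply,
    ite_mul, mul_ite, one_mul, zero_mul, mul_one, mul_zero, ← ite_and, sum_filter, and_comm]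

end IncidenceMatrix

section SimplicialComplex

lemma sum_powerset_erase_empty_neg_one_pow {V : Type*} [DecidableEq V] (s : Finset V) :
    ∑ z ∈ s.powerset.erase ∅, (-1 : ℤ) ^ (#z - 1) = if s.Nonempty then 1 else 0 :=
  calc
    _ = ∑ z ∈ s.powerset.erase ∅, -(-1 : ℤ) ^ #z := by
      refine sum_congr rfl fun z hz => ?_
      have hz : #z ≠ 0 := by simpa using ne_of_mem_erase hz
      rw [← pow_sub_one_mul hz, mul_neg_one, neg_neg]
    _ = 1 - ∑ z ∈ s.powerset, (-1 : ℤ) ^ #z := by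
      rw [sum_neg_distrib, ← add_sum_erase _ _ (empty_mem_powerset s), card_empty, pow_zero,
        sub_add_cancel_left]
    _ = if s.Nonempty then 1 else 0 := by
      rw [sum_powerset_neg_one_pow_card]
      rcases s.eq_empty_or_nonempty with rfl | hs <;> simp [*, Nonempty.ne_empty]

lemma connectionMatrixR_eq_zeta_congr_diagonal {V : Type} [DecidableEq V] (G : Finset (Finset V))
    (hne : ∀ x ∈ G, x ≠ ∅) (hsub : ∀ x ∈ G, ∀ y : Finset V, y ⊆ x → y ≠ ∅ → y ∈ G) :
    connectionMatrixR G = (incidenceMatrix (zeta ℝ))ᵀ *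
      diagonal (fun x : G => (-1 : ℝ) ^ (#x.1 - 1)) * incidenceMatrix (zeta ℝ) := by
  ext x y
  have faces : {z ∈ G | z ⊆ x.1 ∧ z ⊆ y.1} = (x.1 ∩ y.1).powerset.erase ∅ := by
    ext z
    simp only [mem_filter, mem_erase, mem_powerset, subset_inter_iff]
    exact ⟨fun h => ⟨hne z h.1, h.2⟩, fun h => ⟨hsub x x.2 z h.2.1 h.1, h.2⟩⟩
  calc connectionMatrixR G x y
    _ = ((∑ z ∈ (x.1 ∩ y.1).powerset.erase ∅, (-1 : ℤ) ^ (#z - 1) : ℤ) : ℝ) := by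
      rw [sum_powerset_erase_empty_neg_one_pow]
      simp [connectionMatrixR]
    _ = ∑ z : G with z ≤ x ∧ z ≤ y, (-1 : ℝ) ^ (#z.1 - 1) := by
      rw [← faces, sum_filter, ← sum_coe_sort G, sum_filter]
      push_cast
      rfl
    _ = _ := (incidenceMatrix_zeta_congr_diagonal_apply _ x y).symm

end SimplicialComplex

/-- The Euler characteristic of a finite abstract simplicial complex equals the
number of positive eigenvalues minus the number of negative eigenvalues of its
(symmetric) connection matrix, counted with multiplicity. -/
theorem euler_characteristic_eq_signature {V : Type} [DecidableEq V]
    (G : Finset (Finset V))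
    (hne : ∀ x ∈ G, x ≠ ∅)
    (hsub : ∀ x ∈ G, ∀ y : Finset V, y ⊆ x → y ≠ ∅ → y ∈ G)
    (hL : (connectionMatrixR G).IsHermitian) :
    ∑ x ∈ G, (-1 : ℤ) ^ (x.card - 1)
      = ((Finset.univ.filter fun i : G => 0 < hL.eigenvalues i).card : ℤ)
        - ((Finset.univ.filter fun i : G => hL.eigenvalues i < 0).card : ℤ) :=
  calc ∑ x ∈ G, (-1 : ℤ) ^ (#x - 1)
    _ = ∑ x : G, (SignType.sign ((-1 : ℝ) ^ (#x.1 - 1)) : ℤ) := by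
      simp only [sign_neg_one_pow, ← sum_coe_sort G]
    _ = signature (connectionMatrixR G).toQuadraticForm' := by
      rw [connectionMatrixR_eq_zeta_congr_diagonal G hne hsub,
        signature_toQuadraticForm'_congr_diagonal (isUnit_zeta.map incidenceMatrix)]
    _ = ∑ x, (SignType.sign (hL.eigenvalues x) : ℤ) :=
      signature_toQuadraticForm'_eq_sum_sign_eigenvalues hL
    _ = _ := sum_sign_eq_card_pos_sub_card_neg _ _
end

section
/- Gauss–Bonnet for valuations: let G be a finite abstract simplicial complex of maximal dimension d and let X₀, …, X_d be real numbers. For each vertex v (element of the union of the sets in G) define the curvature K(v) = Σ_{k=0}^{d} X_k · |{x ∈ G : v ∈ x and |x| = k+1}| / (k+1). Then Σ_{v} K(v) = Σ_{k=0}^{d} X_k · v_k(G), where v_k(G) is the number of sets in G of cardinality k+1. -/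
/-! Double counting of the incidences `v ∈ x` between vertices and `k`-simplices: every `k`-simplex
has exactly `k + 1` vertices, so the weight `X k` it carries is recovered when the shares
`X k / (k + 1)` given to its vertices are added up again. -/

section GaussBonnet

open Finset

variable {V : Type*} [DecidableEq V]

theorem sum_card_filter_mem_eq_sum_card {𝒜 : Finset (Finset V)} {s : Finset V}
    (h𝒜 : ∀ x ∈ 𝒜, x ⊆ s) : ∑ v ∈ s, #{x ∈ 𝒜 | v ∈ x} = ∑ x ∈ 𝒜, #x :=
  calc
    ∑ v ∈ s, #{x ∈ 𝒜 | v ∈ x} = ∑ x ∈ 𝒜, #{v ∈ s | v ∈ x} :=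
      sum_card_bipartiteAbove_eq_sum_card_bipartiteBelow (· ∈ ·)
    _ = ∑ x ∈ 𝒜, #x := sum_congr rfl fun x hx => by
      rw [filter_mem_eq_inter, inter_eq_right.mpr (h𝒜 x hx)]

theorem sum_card_filter_mem_and_card_eq (G : Finset (Finset V)) (r : ℕ) :
    ∑ v ∈ G.sup id, #{x ∈ G | v ∈ x ∧ #x = r} = #(G # r) * r := by
  have subset_vertices : ∀ x ∈ G # r, x ⊆ G.sup id := fun x hx =>
    le_sup (f := id) (slice_subset hx)
  calc
    ∑ v ∈ G.sup id, #{x ∈ G | v ∈ x ∧ #x = r} = ∑ v ∈ G.sup id, #{x ∈ G # r | v ∈ x} := by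
      simp only [slice, filter_filter, and_comm]
    _ = ∑ x ∈ G # r, #x := sum_card_filter_mem_eq_sum_card subset_vertices
    _ = #(G # r) * r := sum_const_nat fun _ hx => (mem_slice.mp hx).2

variable {𝕜 : Type*} [DivisionSemiring 𝕜]

/-- The curvature at `v` of the valuation `G ↦ ∑ k ∈ D, X k * v_k(G)`: each simplex of dimension
`k ∈ D` containing `v` contributes the share `X k / (k + 1)`. The set `D` of dimensions is a
parameter; for a complex of maximal dimension `d` it is `range (d + 1)`. -/
def valuationCurvature (G : Finset (Finset V)) (D : Finset ℕ) (X : ℕ → 𝕜) (v : V) : 𝕜 :=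
  ∑ k ∈ D, X k * (#{x ∈ G | v ∈ x ∧ #x = k + 1} : 𝕜) / (k + 1)

theorem gauss_bonnet_valuation_general [CharZero 𝕜] (G : Finset (Finset V)) (D : Finset ℕ)
    (X : ℕ → 𝕜) :
    ∑ v ∈ G.sup id, valuationCurvature G D X v = ∑ k ∈ D, X k * (#(G # (k + 1)) : 𝕜) := by
  simp only [valuationCurvature]
  rw [sum_comm]
  refine sum_congr rfl fun k _ => ?_
  have denom_ne_zero : (k + 1 : 𝕜) ≠ 0 := Nat.cast_add_one_ne_zero k
  calc
    ∑ v ∈ G.sup id, X k * (#{x ∈ G | v ∈ x ∧ #x = k + 1} : 𝕜) / (k + 1)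
        = X k * ((∑ v ∈ G.sup id, #{x ∈ G | v ∈ x ∧ #x = k + 1} : ℕ) : 𝕜) / (k + 1) := by
        rw [← sum_div, ← mul_sum, Nat.cast_sum]
    _ = X k * (#(G # (k + 1)) * (k + 1)) / (k + 1) := by
        rw [sum_card_filter_mem_and_card_eq, Nat.cast_mul, Nat.cast_add_one]
    _ = X k * #(G # (k + 1)) := by
        rw [← mul_assoc, mul_div_cancel_right₀ _ denom_ne_zero]

end GaussBonnet

/-- **Gauss–Bonnet for valuations**: distributing the weight `X_k` of each
`k`-dimensional simplex equally to its `k+1` vertices gives a curvature `K(v)`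
whose total sum is the valuation `Σ_k X_k · v_k(G)`. Here `G` has maximal
dimension `d`. -/
theorem gauss_bonnet_valuation {V : Type} [DecidableEq V]
    (G : Finset (Finset V))
    (hne : ∀ x ∈ G, x ≠ ∅)
    (hsub : ∀ x ∈ G, ∀ y : Finset V, y ⊆ x → y ≠ ∅ → y ∈ G)
    (d : ℕ) (hd : G.sup (fun x => x.card - 1) = d)
    (X : ℕ → ℝ) :
    ∑ v ∈ G.sup id, ∑ k ∈ Finset.range (d + 1),
        X k * ((G.filter fun x => v ∈ x ∧ x.card = k + 1).card : ℝ) / (k + 1)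
      = ∑ k ∈ Finset.range (d + 1),
          X k * ((G.filter fun x => x.card = k + 1).card : ℝ) :=
  gauss_bonnet_valuation_general G (Finset.range (d + 1)) X
end

section
/- The Euler characteristic is invariant under Barycentric refinement: for every finite abstract simplicial complex G, Σ_{c∈G₁} (-1)^(|c|-1) = Σ_{x∈G} (-1)^(|x|-1), where G₁ is the set of nonempty finite subsets of G that are chains, i.e. totally ordered by set inclusion. -/
/-!
The only property of the weight `w x = (-1) ^ (|x| - 1)` that matters is that the faces of any
simplex `x`, including `x`, have total weight `1`. Let a finite poset `P` carry a weight `w` with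
this property, and remove a maximal element `x` from it. The chains through `x` form the open star
of the vertex `x` in the complex of chains, and its link consists of the chains of elements strictly
below `x`. By induction, putting `x` back adds `1 - ∑ y < x, w y = w x` to the Euler characteristic,
which is therefore the total weight of `P`.
-/

section EulerCharacteristic

variable {α : Type*}

/-- The Euler characteristic of a finite family of finite sets, a set with `n + 1` elements being
counted as an `n`-dimensional simplex. The empty set must not belong to the family: truncated
subtraction would give it sign `1` instead of `-1`. -/
def eulerCharacteristic (K : Finset (Finset α)) : ℤ :=
  ∑ s ∈ K, (-1) ^ (s.card - 1)

variable [DecidableEq α]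

lemma eulerCharacteristic_image_insert {L : Finset (Finset α)} {x : α}
    (hempty : ∅ ∉ L) (hx : ∀ s ∈ L, x ∉ s) :
    eulerCharacteristic ((insert ∅ L).image (insert x)) = 1 - eulerCharacteristic L := by
  have hx' : ∀ s ∈ insert ∅ L, x ∉ s :=
    (Finset.forall_mem_insert _ _ _).2 ⟨Finset.notMem_empty x, hx⟩
  have hinj : Set.InjOn (insert x) (insert ∅ L : Finset (Finset α)) :=
    Finset.insert_erase_invOn.2.injOn.mono fun s hs => hx' s hs
  have hsign : ∀ s ∈ L, (-1 : ℤ) ^ s.card = -(-1) ^ (s.card - 1) := fun s hs => by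
    have hs' : s.card ≠ 0 := Finset.card_ne_zero.2
      (Finset.nonempty_iff_ne_empty.2 (ne_of_mem_of_not_mem hs hempty))
    rw [← mul_pow_sub_one hs', neg_one_mul]
  calc eulerCharacteristic ((insert ∅ L).image (insert x))
      = ∑ s ∈ insert ∅ L, (-1 : ℤ) ^ ((insert x s).card - 1) := Finset.sum_image hinj
    _ = ∑ s ∈ insert ∅ L, (-1 : ℤ) ^ s.card := Finset.sum_congr rfl fun s hs => by
        rw [Finset.card_insert_of_notMem (hx' s hs), Nat.add_sub_cancel]
    _ = 1 + ∑ s ∈ L, (-1 : ℤ) ^ s.card := by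
        rw [Finset.sum_insert hempty, Finset.card_empty, pow_zero]
    _ = 1 - eulerCharacteristic L := by
        rw [Finset.sum_congr rfl hsign, Finset.sum_neg_distrib, ← sub_eq_add_neg,
          eulerCharacteristic]

lemma eulerCharacteristic_union_image_insert {K L : Finset (Finset α)} {x : α}
    (hempty : ∅ ∉ L) (hK : ∀ s ∈ K, x ∉ s) (hL : ∀ s ∈ L, x ∉ s) :
    eulerCharacteristic (K ∪ (insert ∅ L).image (insert x)) =
      eulerCharacteristic K + (1 - eulerCharacteristic L) := by
  have hdisj : Disjoint K ((insert ∅ L).image (insert x)) := by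
    refine Finset.disjoint_left.2 fun s hs hs' => hK s hs ?_
    obtain ⟨t, -, rfl⟩ := Finset.mem_image.1 hs'
    exact Finset.mem_insert_self x t
  rw [← eulerCharacteristic_image_insert hempty hL]
  exact Finset.sum_union hdisj

lemma eulerCharacteristic_powerset_erase_empty {s : Finset α} (hs : s.Nonempty) :
    eulerCharacteristic (s.powerset.erase ∅) = 1 := by
  obtain ⟨x, hx⟩ := hs
  have hface : ∀ t ∈ (s.erase x).powerset.erase ∅, x ∉ t := fun t ht hxt =>
    Finset.notMem_erase x s (Finset.mem_powerset.1 (Finset.mem_of_mem_erase ht) hxt)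
  have hcone : s.powerset.erase ∅ = (s.erase x).powerset.erase ∅ ∪
      (insert ∅ ((s.erase x).powerset.erase ∅)).image (insert x) := by
    rw [Finset.insert_erase (Finset.empty_mem_powerset _), ← Finset.insert_erase hx,
      Finset.powerset_insert, Finset.erase_union_distrib, Finset.insert_erase hx]
    congr 1
    exact Finset.erase_eq_of_notMem (by simp)
  rw [hcone, eulerCharacteristic_union_image_insert (Finset.notMem_erase _ _) hface hface,
    add_sub_cancel]

end EulerCharacteristic

section OrderComplex

variable {α : Type*}

section Preorder

variable [Preorder α] [DecidableLE α]

/-- The order complex of a finite subset `P` of a preorder: the nonempty chains contained in `P`.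
For the poset of simplices of a simplicial complex, this is the Barycentric refinement. -/
def orderComplex (P : Finset α) : Finset (Finset α) :=
  {c ∈ P.powerset | c.Nonempty ∧ ∀ x ∈ c, ∀ y ∈ c, x ≤ y ∨ y ≤ x}

lemma mem_orderComplex {P c : Finset α} :
    c ∈ orderComplex P ↔ c ⊆ P ∧ c.Nonempty ∧ ∀ x ∈ c, ∀ y ∈ c, x ≤ y ∨ y ≤ x := by
  rw [orderComplex, Finset.mem_filter, Finset.mem_powerset]

lemma empty_notMem_orderComplex (P : Finset α) : ∅ ∉ orderComplex P := fun h =>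
  Finset.not_nonempty_empty (mem_orderComplex.1 h).2.1

lemma notMem_of_mem_orderComplex {P c : Finset α} {x : α} (hx : x ∉ P)
    (hc : c ∈ orderComplex P) : x ∉ c := fun hxc => hx ((mem_orderComplex.1 hc).1 hxc)

lemma insert_mem_orderComplex_insert [DecidableEq α] {P t : Finset α} {x : α}
    (hx : ∀ y ∈ P, ¬x ≤ y) (hxt : x ∉ t) :
    insert x t ∈ orderComplex (insert x P) ↔
      t ∈ insert ∅ (orderComplex {y ∈ P | y ≤ x}) := by
  rcases t.eq_empty_or_nonempty with rfl | ht
  · simp [mem_orderComplex]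
  have hbelow : t ⊆ {y ∈ P | y ≤ x} ↔ t ⊆ P ∧ ∀ y ∈ t, y ≤ x := by
    simp only [Finset.subset_iff, Finset.mem_filter, forall₂_and]
  have hchain (htP : t ⊆ P) : (∀ a ∈ insert x t, ∀ b ∈ insert x t, a ≤ b ∨ b ≤ a) ↔
      (∀ y ∈ t, y ≤ x) ∧ ∀ a ∈ t, ∀ b ∈ t, a ≤ b ∨ b ≤ a := by
    have hcomparable : ∀ y ∈ t, (x ≤ y ∨ y ≤ x ↔ y ≤ x) := fun y hy =>
      or_iff_right (hx y (htP hy))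
    grind
  rw [Finset.mem_insert, or_iff_right ht.ne_empty, mem_orderComplex, mem_orderComplex,
    Finset.insert_subset_insert_iff hxt, hbelow, and_assoc]
  refine and_congr_right fun htP => ?_
  rw [hchain htP, and_left_comm, and_iff_right (Finset.insert_nonempty x t), and_iff_right ht]

lemma orderComplex_insert [DecidableEq α] {P : Finset α} {x : α} (hx : ∀ y ∈ P, ¬x ≤ y) :
    orderComplex (insert x P) =
      orderComplex P ∪ (insert ∅ (orderComplex {y ∈ P | y ≤ x})).image (insert x) := by
  have hxP : x ∉ P := fun h => hx x h le_rfl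
  have hlink : ∀ t ∈ insert ∅ (orderComplex {y ∈ P | y ≤ x}), x ∉ t := by
    refine (Finset.forall_mem_insert _ _ _).2 ⟨Finset.notMem_empty x, fun t ht => ?_⟩
    exact notMem_of_mem_orderComplex (fun h => hxP (Finset.mem_of_mem_filter x h)) ht
  ext c
  rw [Finset.mem_union, Finset.mem_image]
  constructor
  · intro hc
    by_cases hxc : x ∈ c
    · refine .inr ⟨c.erase x, ?_, Finset.insert_erase hxc⟩
      rwa [← insert_mem_orderComplex_insert hx (Finset.notMem_erase x c), Finset.insert_erase hxc]
    · rw [mem_orderComplex, Finset.subset_insert_iff_of_notMem hxc] at hc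
      exact .inl (mem_orderComplex.2 hc)
  · rintro (hc | ⟨t, ht, rfl⟩)
    · obtain ⟨hcP, hc⟩ := mem_orderComplex.1 hc
      exact mem_orderComplex.2 ⟨hcP.trans (Finset.subset_insert x P), hc⟩
    · exact (insert_mem_orderComplex_insert hx (hlink t ht)).2 ht

lemma eulerCharacteristic_orderComplex_insert [DecidableEq α] {P : Finset α} {x : α}
    (hx : ∀ y ∈ P, ¬x ≤ y) :
    eulerCharacteristic (orderComplex (insert x P)) = eulerCharacteristic (orderComplex P) +
      (1 - eulerCharacteristic (orderComplex {y ∈ P | y ≤ x})) := by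
  have hxP : x ∉ P := fun h => hx x h le_rfl
  rw [orderComplex_insert hx]
  exact eulerCharacteristic_union_image_insert (empty_notMem_orderComplex _)
    (fun _ => notMem_of_mem_orderComplex hxP)
    (fun _ => notMem_of_mem_orderComplex fun h => hxP (Finset.mem_of_mem_filter x h))

end Preorder

theorem euler_characteristic_barycentric_general [PartialOrder α] [DecidableLE α]
    (P : Finset α) (w : α → ℤ)
    (hw : ∀ x ∈ P, ∑ y ∈ P with y ≤ x, w y = 1) :
    eulerCharacteristic (orderComplex P) = ∑ x ∈ P, w x := by
  classical
  induction P using Finset.strongInduction with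
  | H P ih =>
  have ih_lower : ∀ Q ⊂ P, (∀ y ∈ Q, ∀ z ∈ P, z ≤ y → z ∈ Q) →
      eulerCharacteristic (orderComplex Q) = ∑ y ∈ Q, w y := fun Q hQ hlower => by
    refine ih Q hQ fun y hy => ?_
    have hbelow : {z ∈ Q | z ≤ y} = {z ∈ P | z ≤ y} :=
      (Finset.filter_subset_filter _ hQ.subset).antisymm fun z hz => by grind
    rw [hbelow, hw y (hQ.subset hy)]
  rcases P.eq_empty_or_nonempty with rfl | hP
  · rfl
  obtain ⟨x, hx⟩ := P.exists_maximal hP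
  have hxP : x ∈ P := hx.prop
  have hmax : ∀ y ∈ P.erase x, ¬x ≤ y := fun y hy hxy =>
    Finset.ne_of_mem_erase hy (hx.eq_of_le (Finset.mem_of_mem_erase hy) hxy).symm
  have herase_lower : ∀ y ∈ P.erase x, ∀ z ∈ P, z ≤ y → z ∈ P.erase x := fun y hy z hz hzy =>
    Finset.mem_erase.2 ⟨fun hzx => hmax y hy (hzx ▸ hzy), hz⟩
  have hdeletion : eulerCharacteristic (orderComplex (P.erase x)) = ∑ y ∈ P.erase x, w y :=
    ih_lower _ (Finset.erase_ssubset hxP) herase_lower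
  have hlink : eulerCharacteristic (orderComplex {y ∈ P.erase x | y ≤ x}) =
      ∑ y ∈ P.erase x with y ≤ x, w y := by
    refine ih_lower _ ((Finset.filter_subset _ _).trans_ssubset (Finset.erase_ssubset hxP)) ?_
    intro y hy z hz hzy
    obtain ⟨hyP, hyx⟩ := Finset.mem_filter.1 hy
    exact Finset.mem_filter.2 ⟨herase_lower y hyP z hz hzy, hzy.trans hyx⟩
  have hweight : w x + ∑ y ∈ P.erase x with y ≤ x, w y = 1 := by
    have hx_self : x ∈ {y ∈ P | y ≤ x} := Finset.mem_filter.2 ⟨hxP, le_rfl⟩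
    rw [Finset.filter_erase, Finset.add_sum_erase _ _ hx_self, hw x hxP]
  calc eulerCharacteristic (orderComplex P)
      = eulerCharacteristic (orderComplex (insert x (P.erase x))) := by
        rw [Finset.insert_erase hxP]
    _ = ∑ y ∈ P.erase x, w y + (1 - ∑ y ∈ P.erase x with y ≤ x, w y) := by
        rw [eulerCharacteristic_orderComplex_insert hmax, hdeletion, hlink]
    _ = ∑ y ∈ P.erase x, w y + w x := by rw [← hweight, add_sub_cancel_right]
    _ = ∑ y ∈ P, w y := Finset.sum_erase_add P w hxP

end OrderComplex

/-- The Euler characteristic is invariant under Barycentric refinement: the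
Barycentric refinement `G₁` of `G` consists of the nonempty subsets of `G`
that are chains (totally ordered by inclusion), and its Euler characteristic
equals that of `G`. -/
theorem euler_characteristic_barycentric {V : Type} [DecidableEq V]
    (G : Finset (Finset V))
    (hne : ∀ x ∈ G, x ≠ ∅)
    (hsub : ∀ x ∈ G, ∀ y : Finset V, y ⊆ x → y ≠ ∅ → y ∈ G) :
    ∑ c ∈ G.powerset.filter
        (fun c => c.Nonempty ∧ ∀ x ∈ c, ∀ y ∈ c, x ⊆ y ∨ y ⊆ x),
        (-1 : ℤ) ^ (c.card - 1)
      = ∑ x ∈ G, (-1 : ℤ) ^ (x.card - 1) := by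
  refine euler_characteristic_barycentric_general G _ fun x hx => ?_
  have hfaces : {y ∈ G | y ≤ x} = x.powerset.erase ∅ := by
    ext y
    simp only [Finset.mem_filter, Finset.mem_erase, Finset.mem_powerset]
    exact ⟨fun h => ⟨hne y h.1, h.2⟩, fun h => ⟨hsub x hx y h.2 h.1, h.2⟩⟩
  rw [hfaces]
  exact eulerCharacteristic_powerset_erase_empty (Finset.nonempty_iff_ne_empty.2 (hne x hx))
end

section
/- Stirling formula for Barycentric refinement: let G be a finite abstract simplicial complex. For every k ≥ 1, the number of chains in G with exactly k elements (i.e. subsets of G of cardinality k totally ordered by inclusion) equals Σ_{j≥1} c_j(G) · S(j,k) · k!, where c_j(G) is the number of sets in G of cardinality j and S(j,k) is the Stirling number of the second kind (equivalently, S(j,k)·k! is the number of surjections from a j-element set onto a k-element set). -/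
/-!
Group the chains by their union `x`, which is also their largest member. The chains of `k` nonempty
sets with union `x` correspond to the surjections `f : x → Fin k`: send `f` to the chain of its
sublevel sets `{v | f v ≤ i}`, and recover `f v` as the index of the first member of the chain that
contains `v`. As `G` contains all nonempty subsets of `x`, none of these chains leaves `G`.
-/

/-- `surjCount j k = S(j,k)·k!` is the number of surjections from a `j`-element
set onto a `k`-element set, where `S(j,k)` is the Stirling number of the second
kind. -/
noncomputable def surjCount (j k : ℕ) : ℕ :=
  Nat.card {f : Fin j → Fin k // Function.Surjective f}

lemma surjCount_natCard (α : Type*) [Finite α] (k : ℕ) :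
    surjCount (Nat.card α) k = Nat.card {f : α → Fin k // Function.Surjective f} := by
  let e : (Fin (Nat.card α) → Fin k) ≃ (α → Fin k) :=
    (Finite.equivFin α).symm.arrowCongr (Equiv.refl _)
  refine Nat.card_congr (e.subtypeEquiv fun f => ?_)
  simp [e, Equiv.arrowCongr]

lemma sum_comp_eq_sum_range_sup {α M : Type*} [AddCommMonoid M] (s : Finset α) (d : α → ℕ)
    (g : ℕ → M) :
    ∑ x ∈ s, g (d x) =
      ∑ j ∈ Finset.range (s.sup d + 1), (s.filter fun x => d x = j).card • g j := by
  have mem_range (x) (hx : x ∈ s) : d x ∈ Finset.range (s.sup d + 1) :=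
    Finset.mem_range_succ_iff.2 (Finset.le_sup hx)
  simp only [← Finset.sum_fiberwise_of_maps_to' mem_range, Finset.sum_const]

lemma exists_strictMono_range_eq_of_isChain {α : Type*} [PartialOrder α] {c : Finset α}
    (hc : IsChain (· ≤ ·) (c : Set α)) :
    ∃ s : Fin c.card → α, StrictMono s ∧ Set.range s = c := by
  classical
  let : LinearOrder c := hc.linearOrder
  let e : Fin c.card ≃o c := Fintype.orderIsoFinOfCardEq c (Fintype.card_coe c)
  refine ⟨fun i => e i, fun i j hij => e.strictMono hij, ?_⟩
  exact (e.surjective.range_comp Subtype.val).trans Subtype.range_coe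

lemma sup_id_mem_of_isChain {α : Type*} [SemilatticeSup α] [OrderBot α] {c : Finset α}
    (hc : IsChain (· ≤ ·) (c : Set α)) (hne : c.Nonempty) : c.sup id ∈ c := by
  rw [← Finset.sup'_eq_sup hne]
  refine Finset.sup'_mem (c : Set α) (fun x hx y hy => ?_) c hne id fun x hx => hx
  rcases hc.total hx hy with h | h
  · rwa [sup_eq_right.2 h]
  · rwa [sup_eq_left.2 h]

lemma exists_mem_forall_lt_notMem_of_strictMono {V ι : Type*} [LinearOrder ι] [PredOrder ι]
    {s : ι → Finset V} (hs : StrictMono s) (hne : ∀ i, (s i).Nonempty) (i : ι) :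
    ∃ v ∈ s i, ∀ j < i, v ∉ s j := by
  by_cases hi : IsMin i
  · obtain ⟨v, hv⟩ := hne i
    exact ⟨v, hv, fun j hj => absurd hj hi.not_lt⟩
  · obtain ⟨v, hv, hv'⟩ := Finset.exists_of_ssubset (hs (Order.pred_lt_of_not_isMin hi))
    exact ⟨v, hv, fun j hj h => hv' (hs.monotone (Order.le_pred_of_lt hj) h)⟩

section Sublevel

variable {V ι : Type*} {x : Finset V}

/-- The sublevel set `{v | f v ≤ i}` of a function `f` on a finite set `x`, as a set of elements
of the ambient type. The sublevel sets of a surjection onto `Fin k` form a chain of length `k`. -/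
def sublevel [LE ι] [DecidableLE ι] (f : x → ι) (i : ι) : Finset V :=
  (Finset.univ.filter fun v => f v ≤ i).map (Function.Embedding.subtype _)

lemma mem_sublevel [LE ι] [DecidableLE ι] {f : x → ι} {i : ι} {v : V} :
    v ∈ sublevel f i ↔ ∃ h : v ∈ x, f ⟨v, h⟩ ≤ i := by
  simp [sublevel]

lemma coe_mem_sublevel [LE ι] [DecidableLE ι] {f : x → ι} {i : ι} {v : x} :
    (v : V) ∈ sublevel f i ↔ f v ≤ i := by
  simp [mem_sublevel]

lemma sublevel_subset [LE ι] [DecidableLE ι] (f : x → ι) (i : ι) : sublevel f i ⊆ x :=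
  fun _ hv => (mem_sublevel.1 hv).1

lemma sublevel_nonempty [Preorder ι] [DecidableLE ι] {f : x → ι} (hf : Function.Surjective f)
    (i : ι) : (sublevel f i).Nonempty := by
  obtain ⟨v, hv⟩ := hf i
  exact ⟨v, coe_mem_sublevel.2 hv.le⟩

lemma strictMono_sublevel [Preorder ι] [DecidableLE ι] {f : x → ι} (hf : Function.Surjective f) :
    StrictMono (sublevel f) := by
  intro i j hij
  refine Finset.ssubset_iff_subset_ne.2 ⟨fun v hv => ?_, fun h => ?_⟩
  · obtain ⟨hvx, hvi⟩ := mem_sublevel.1 hv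
    exact mem_sublevel.2 ⟨hvx, hvi.trans hij.le⟩
  · obtain ⟨v, rfl⟩ := hf j
    exact hij.not_ge (coe_mem_sublevel.1 (h ▸ coe_mem_sublevel.2 le_rfl))

lemma sublevel_injective [PartialOrder ι] [DecidableLE ι] :
    Function.Injective (sublevel : (x → ι) → ι → Finset V) := by
  intro f g hfg
  funext v
  refine eq_of_forall_ge_iff fun i => ?_
  rw [← coe_mem_sublevel, hfg, coe_mem_sublevel]

lemma sup_sublevel [Preorder ι] [DecidableLE ι] [Fintype ι] [DecidableEq V] (f : x → ι) :
    Finset.univ.sup (sublevel f) = x := by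
  refine le_antisymm (Finset.sup_le fun i _ => sublevel_subset f i) fun v hv => ?_
  exact Finset.mem_sup.2 ⟨f ⟨v, hv⟩, Finset.mem_univ _, mem_sublevel.2 ⟨hv, le_rfl⟩⟩

lemma exists_surjective_sublevel_eq [LinearOrder ι] [PredOrder ι] [Fintype ι] [DecidableEq V]
    {s : ι → Finset V} (hs : StrictMono s) (hne : ∀ i, (s i).Nonempty)
    (hx : Finset.univ.sup s = x) :
    ∃ f : x → ι, Function.Surjective f ∧ sublevel f = s := by
  have exists_least (v : x) : ∃ i, IsLeast {i | (v : V) ∈ s i} i := by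
    have hv : ∃ i, (v : V) ∈ s i := by simpa [← hx, Finset.mem_sup] using v.2
    obtain ⟨i, hi⟩ := (Set.toFinite {i | (v : V) ∈ s i}).exists_minimal hv
    exact ⟨i, minimal_iff_isLeast.1 hi⟩
  choose f hf using exists_least
  have mem_iff (v : x) (i : ι) : (v : V) ∈ s i ↔ f v ≤ i :=
    ⟨fun h => (hf v).2 h, fun h => hs.monotone h (hf v).1⟩
  have subset (i : ι) : s i ⊆ x := hx ▸ Finset.le_sup (Finset.mem_univ i)
  refine ⟨f, fun i => ?_, ?_⟩
  · obtain ⟨v, hv, hlt⟩ := exists_mem_forall_lt_notMem_of_strictMono hs hne i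
    exact ⟨⟨v, subset i hv⟩, ((hf _).2 hv).eq_of_not_lt fun h => hlt _ h (hf ⟨v, _⟩).1⟩
  · ext i v
    rw [mem_sublevel]
    exact ⟨fun ⟨hv, h⟩ => (mem_iff ⟨v, hv⟩ i).2 h,
      fun hv => ⟨subset i hv, (mem_iff ⟨v, subset i hv⟩ i).1 hv⟩⟩

end Sublevel

section Chains

variable {V : Type*} [DecidableEq V]

lemma injOn_image_sublevel {ι : Type*} [LinearOrder ι] [Fintype ι] (x : Finset V) :
    Set.InjOn (fun f : x → ι => Finset.univ.image (sublevel f)) {f | Function.Surjective f} := by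
  intro f hf g hg h
  have range_eq : Set.range (sublevel f) = Set.range (sublevel g) := by
    simpa [← Finset.coe_inj] using h
  exact sublevel_injective
    (((strictMono_sublevel hf).range_inj (strictMono_sublevel hg)).1 range_eq)

lemma exists_surjective_image_sublevel_eq_iff {x : Finset V} {c : Finset (Finset V)} {k : ℕ} :
    (∃ f : x → Fin k, Function.Surjective f ∧ Finset.univ.image (sublevel f) = c) ↔
      c.card = k ∧ IsChain (· ≤ ·) (c : Set (Finset V)) ∧ ∅ ∉ c ∧ c.sup id = x := by
  constructor
  · rintro ⟨f, hf, rfl⟩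
    have hmono := strictMono_sublevel hf
    refine ⟨?_, ?_, ?_, ?_⟩
    · rw [Finset.card_image_of_injective _ hmono.injective, Finset.card_fin]
    · simpa using hmono.monotone.isChain_range
    · simpa using fun i => (sublevel_nonempty hf i).ne_empty
    · rw [Finset.sup_image, Function.id_comp, sup_sublevel]
  · rintro ⟨rfl, hchain, hne, rfl⟩
    obtain ⟨s, hs, hrange⟩ := exists_strictMono_range_eq_of_isChain hchain
    have himage : Finset.univ.image s = c := by
      rw [← Finset.coe_inj, Finset.coe_image, Finset.coe_univ, Set.image_univ, hrange]
    have hnonempty (i) : (s i).Nonempty := by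
      refine Finset.nonempty_iff_ne_empty.2 fun h => hne ?_
      rw [← himage, ← h]
      exact Finset.mem_image_of_mem s (Finset.mem_univ i)
    obtain ⟨f, hf, rfl⟩ := exists_surjective_sublevel_eq (x := c.sup id) hs hnonempty (by
      conv_rhs => rw [← himage, Finset.sup_image, Function.id_comp])
    exact ⟨f, hf, himage⟩

/-- The chains in `G` with exactly `k` elements, that is, the `(k - 1)`-dimensional simplices of the
barycentric refinement of `G`. -/
def chains (G : Finset (Finset V)) (k : ℕ) : Finset (Finset (Finset V)) :=
  G.powerset.filter fun c => c.card = k ∧ ∀ x ∈ c, ∀ y ∈ c, x ⊆ y ∨ y ⊆ x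

lemma mem_chains {G : Finset (Finset V)} {k : ℕ} {c : Finset (Finset V)} :
    c ∈ chains G k ↔ c ⊆ G ∧ c.card = k ∧ IsChain (· ≤ ·) (c : Set (Finset V)) := by
  have isChain_iff : IsChain (· ≤ ·) (c : Set (Finset V)) ↔
      ∀ x ∈ c, ∀ y ∈ c, x ⊆ y ∨ y ⊆ x :=
    ⟨fun h x hx y hy => h.total hx hy, fun h x hx y hy _ => h x hx y hy⟩
  rw [chains, Finset.mem_filter, Finset.mem_powerset, isChain_iff]

lemma card_chains_sup_eq_surjCount {G : Finset (Finset V)} {x : Finset V} (hne : ∅ ∉ G)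
    (hx : ∀ y ⊆ x, y ≠ ∅ → y ∈ G) (k : ℕ) :
    ((chains G k).filter fun c => c.sup id = x).card = surjCount x.card k := by
  have filter_eq : ((chains G k).filter fun c => c.sup id = x) =
      (Finset.univ.filter fun f : x → Fin k => Function.Surjective f).image
        fun f => Finset.univ.image (sublevel f) := by
    ext c
    simp only [Finset.mem_filter, mem_chains, Finset.mem_image, Finset.mem_univ, true_and,
      exists_surjective_image_sublevel_eq_iff]
    constructor
    · rintro ⟨⟨hcG, hcard, hchain⟩, hsup⟩
      exact ⟨hcard, hchain, fun h => hne (hcG h), hsup⟩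
    · rintro ⟨hcard, hchain, hempty, rfl⟩
      exact ⟨⟨fun y hy => hx y (Finset.le_sup (f := id) hy) (ne_of_mem_of_not_mem hy hempty),
        hcard, hchain⟩, rfl⟩
  have injOn := injOn_image_sublevel (ι := Fin k) x
  rw [filter_eq, Finset.card_image_of_injOn (by simpa using injOn), ← Fintype.card_subtype,
    ← Nat.card_eq_fintype_card, ← surjCount_natCard, Nat.card_eq_finsetCard]

lemma card_chains_eq_sum_surjCount {G : Finset (Finset V)} (hne : ∅ ∉ G)
    (hsub : ∀ x ∈ G, ∀ y ⊆ x, y ≠ ∅ → y ∈ G) {k : ℕ} (hk : k ≠ 0) :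
    (chains G k).card = ∑ x ∈ G, surjCount x.card k := by
  have sup_mem (c) (hc : c ∈ chains G k) : c.sup id ∈ G := by
    obtain ⟨hcG, rfl, hchain⟩ := mem_chains.1 hc
    exact hcG (sup_id_mem_of_isChain hchain (Finset.card_ne_zero.1 hk))
  rw [Finset.card_eq_sum_card_fiberwise sup_mem]
  exact Finset.sum_congr rfl fun x hx => card_chains_sup_eq_surjCount hne (hsub x hx) k

theorem barycentric_stirling_general {G : Finset (Finset V)} (hne : ∅ ∉ G)
    (hsub : ∀ x ∈ G, ∀ y ⊆ x, y ≠ ∅ → y ∈ G) {k : ℕ} (hk : k ≠ 0) :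
    (chains G k).card = ∑ j ∈ Finset.range (G.sup Finset.card + 1),
      (G.filter fun x => x.card = j).card * surjCount j k := by
  rw [card_chains_eq_sum_surjCount hne hsub hk]
  exact sum_comp_eq_sum_range_sup G Finset.card (surjCount · k)

end Chains

/-- **Stirling formula for Barycentric refinement**: for `k ≥ 1`, the number of
chains in `G` with exactly `k` elements equals `Σ_j c_j(G) · S(j,k) · k!`,
where `c_j(G)` is the number of sets in `G` of cardinality `j`. -/
theorem barycentric_stirling {V : Type} [DecidableEq V]
    (G : Finset (Finset V))
    (hne : ∀ x ∈ G, x ≠ ∅)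
    (hsub : ∀ x ∈ G, ∀ y : Finset V, y ⊆ x → y ≠ ∅ → y ∈ G)
    (k : ℕ) (hk : 1 ≤ k) :
    (G.powerset.filter
        (fun c => c.card = k ∧ ∀ x ∈ c, ∀ y ∈ c, x ⊆ y ∨ y ⊆ x)).card
      = ∑ j ∈ Finset.range (G.sup Finset.card + 1),
          (G.filter fun x => x.card = j).card * surjCount j k := by
  exact barycentric_stirling_general (fun h => hne ∅ h rfl) hsub (Nat.one_le_iff_ne_zero.1 hk)
end

section
/- Generalized Cauchy–Binet: let F and G be n × m matrices over a commutative ring R and z ∈ R. Then det(1 + z·Fᵀ·G) = Σ_{(P,Q)} z^{|P|} · det(F_{P,Q}) · det(G_{P,Q}), where the sum is over all pairs of subsets P of the row indices and Q of the column indices with |P| = |Q| (including the empty pair, whose term is 1), and F_{P,Q} denotes the square submatrix of F with rows P and columns Q. Equivalently, the coefficients of the characteristic polynomial of FᵀG are sums of products of corresponding k-minors of F and G. -/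
/-- The `k`-minor of a matrix `A` determined by a set `P` of rows and a set `Q`
of columns with `|P| = |Q|` (and `0` if the cardinalities differ). -/
def minorDet {R : Type} [CommRing R] {n m : ℕ}
    (A : Matrix (Fin n) (Fin m) R) (P : Finset (Fin n)) (Q : Finset (Fin m)) : R :=
  if h : P.card = Q.card then
    (A.submatrix (fun i : Fin P.card => P.orderEmbOfFin rfl i)
      (fun i : Fin P.card => Q.orderEmbOfFin h.symm i)).det
  else 0

/-!
Expanding `det (1 + z • M)` in powers of `z` gives the sum of `z ^ |Q| * det M_{Q,Q}` over the
principal minors of `M`. For `M = Fᵀ * G` the block on `Q` is `F_Qᵀ * G_Q`, where `F_Q` and `G_Q`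
consist of the columns in `Q`, so the classical Cauchy–Binet formula expands its determinant over
the row sets `P` with `|P| = |Q|`.

The classical formula is a change of coordinates in an exterior power: `A ↦ det (A * B)` is
alternating in the rows of `A`, hence factors through `⋀ᵏ Rⁿ`, and the coordinates of the wedge of
the rows of `A` in the standard basis are the maximal minors of `A`.
-/

open Finset Matrix Polynomial Set.powersetCard

section CauchyBinet

variable {R : Type*} [CommRing R] {k : ℕ}

theorem alternatingMap_apply_eq_sum_det_smul {M N ι : Type*} [AddCommGroup M] [Module R M]
    [AddCommGroup N] [Module R N] [Fintype ι] [LinearOrder ι]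
    (f : M [⋀^Fin k]→ₗ[R] N) (b : Module.Basis ι R M) (v : Fin k → M) :
    f v = ∑ P : Set.powersetCard ι k,
      (of fun i j => b.repr (v i) (ofFinEmbEquiv.symm P j)).det •
        f (b ∘ ofFinEmbEquiv.symm P) := by
  have hwedge := (b.exteriorPower k).sum_repr (exteriorPower.ιMulti R k v)
  have hf := congrArg (exteriorPower.alternatingMapLinearEquiv f) hwedge
  simpa [exteriorPower.basis_repr_apply, exteriorPower.ιMulti_family, eq_comm] using hf

theorem det_mul_eq_sum_det_mul_det {n : Type*} [Fintype n] [LinearOrder n]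
    (A : Matrix (Fin k) n R) (B : Matrix n (Fin k) R) :
    (A * B).det = ∑ P : Set.powersetCard n k,
      (A.submatrix id (ofFinEmbEquiv.symm P)).det *
        (B.submatrix (ofFinEmbEquiv.symm P) id).det := by
  let f := (detRowAlternating (R := R)).compLinearMap B.vecMulLinear
  have hf_basis (P : Set.powersetCard n k) :
      f (Pi.basisFun R n ∘ ofFinEmbEquiv.symm P)
        = (B.submatrix (ofFinEmbEquiv.symm P) id).det := by
    change det _ = det _
    congr 1
    ext i j
    simp
  calc (A * B).det = f A := rfl
    _ = ∑ P : Set.powersetCard n k, (A.submatrix id (ofFinEmbEquiv.symm P)).det *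
          (B.submatrix (ofFinEmbEquiv.symm P) id).det := by
      rw [alternatingMap_apply_eq_sum_det_smul f (Pi.basisFun R n) A]
      simp only [hf_basis, Pi.basisFun_repr, smul_eq_mul]
      rfl

end CauchyBinet

section DetOneAdd

variable {R m : Type*} [CommRing R] [Fintype m]

theorem det_one_add_smul_eq_sum_minors [DecidableEq m] (M : Matrix m m R) (z : R) :
    (1 + z • M).det = ∑ Q : Finset m, z ^ #Q *
      (M.submatrix (Subtype.val : Q → m) Subtype.val).det := by
  let p : R[X] := (1 + (X : R[X]) • M.map C).det
  have hdeg : p.natDegree < #(univ : Finset m) + 1 := by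
    simpa [p, add_comm, Nat.lt_succ_iff] using natDegree_det_X_add_C_le M 1
  calc (1 + z • M).det = p.eval z := by simp [p, eval_det, ← smul_eq_mul_diagonal]
    _ = ∑ k ∈ range (#(univ : Finset m) + 1), p.coeff k * z ^ k := eval_eq_sum_range' hdeg z
    _ = ∑ k ∈ range (#(univ : Finset m) + 1), ∑ Q ∈ powersetCard k univ,
          z ^ #Q * (M.submatrix (Subtype.val : Q → m) Subtype.val).det := by
      refine sum_congr rfl fun k _ => ?_
      rw [coeff_det_one_add_X_smul_eq_sum_minors, mul_comm, mul_sum]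
      exact sum_congr rfl fun Q hQ => by rw [(mem_powersetCard.1 hQ).2]
    _ = _ := by rw [← sum_powerset, powerset_univ]

theorem generalized_cauchy_binet_general [LinearOrder m] {n : Type*} [Fintype n] [LinearOrder n]
    (F G : Matrix n m R) (z : R) :
    (1 + z • (Fᵀ * G)).det = ∑ Q : Finset m, ∑ P : Set.powersetCard n #Q, z ^ #Q *
      (F.submatrix (ofFinEmbEquiv.symm P) (Q.orderEmbOfFin rfl)).det *
      (G.submatrix (ofFinEmbEquiv.symm P) (Q.orderEmbOfFin rfl)).det := by
  rw [det_one_add_smul_eq_sum_minors]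
  refine sum_congr rfl fun Q _ => ?_
  let e := Q.orderEmbOfFin rfl
  have hblock : ((Fᵀ * G).submatrix (Subtype.val : Q → m) Subtype.val).det
      = ((F.submatrix id e)ᵀ * G.submatrix id e).det :=
    (det_submatrix_equiv_self (Q.orderIsoOfFin rfl).toEquiv _).symm
  rw [hblock, det_mul_eq_sum_det_mul_det, mul_sum]
  refine sum_congr rfl fun P _ => ?_
  rw [← transpose_submatrix, det_transpose, mul_assoc]
  rfl

end DetOneAdd

section MinorDet

variable {R : Type} [CommRing R] {n m k : ℕ}

theorem minorDet_eq_det_submatrix (A : Matrix (Fin n) (Fin m) R) {P : Finset (Fin n)}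
    {Q : Finset (Fin m)} (hP : #P = k) (hQ : #Q = k) :
    minorDet A P Q = (A.submatrix (P.orderEmbOfFin hP) (Q.orderEmbOfFin hQ)).det := by
  subst hP
  exact dif_pos hQ.symm

theorem sum_minorDet_mul_minorDet (F G : Matrix (Fin n) (Fin m) R) (z : R) (Q : Finset (Fin m)) :
    ∑ P : Finset (Fin n), z ^ #P * minorDet F P Q * minorDet G P Q =
      ∑ P : Set.powersetCard (Fin n) #Q, z ^ #Q *
        (F.submatrix (ofFinEmbEquiv.symm P) (Q.orderEmbOfFin rfl)).det *
        (G.submatrix (ofFinEmbEquiv.symm P) (Q.orderEmbOfFin rfl)).det := by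
  have hzero (P : Finset (Fin n)) (hP : #P ≠ #Q) :
      z ^ #P * minorDet F P Q * minorDet G P Q = 0 := by
    simp [minorDet, hP]
  rw [← sum_subset (subset_univ (powersetCard #Q univ)) fun P _ hP => hzero P (by simpa using hP)]
  rw [sum_subtype (p := (· ∈ Set.powersetCard (Fin n) #Q)) _ (by simp)]
  refine sum_congr rfl fun P _ => ?_
  rw [minorDet_eq_det_submatrix F P.2 rfl, minorDet_eq_det_submatrix G P.2 rfl, P.2]
  rfl

end MinorDet

/-- **Generalized Cauchy–Binet**: for `n × m` matrices `F, G` over a commutative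
ring and any `z`, `det(1 + z·Fᵀ·G)` is the sum over all pairs of subsets
`P` of rows and `Q` of columns with `|P| = |Q|` of
`z^{|P|}·det(F_{P,Q})·det(G_{P,Q})` (pairs with `|P| ≠ |Q|` contribute `0`). -/
theorem generalized_cauchy_binet {R : Type} [CommRing R] {n m : ℕ}
    (F G : Matrix (Fin n) (Fin m) R) (z : R) :
    (1 + z • (F.transpose * G)).det
      = ∑ P : Finset (Fin n), ∑ Q : Finset (Fin m),
          z ^ P.card * minorDet F P Q * minorDet G P Q := by
  rw [sum_comm, generalized_cauchy_binet_general]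
  exact sum_congr rfl fun Q _ => (sum_minorDet_mul_minorDet F G z Q).symm
end

section
/- Chebotarev–Shamis forest theorem: let G be a finite simple graph with Kirchhoff Laplacian K (degree diagonal matrix minus adjacency matrix). Then det(K + 1) equals the number of rooted spanning forests of G, i.e. the number of pairs (F, R) where F is an acyclic subgraph of G on the full vertex set and R is a set of vertices containing exactly one vertex from each connected component of F. -/
/-!
Row `v` of `diagonal (x + row sums of A) - A` is `x v • e_v + ∑ w, A v w • (e_v - e_w)`. Expanding
the determinant multilinearly in the rows means choosing for each vertex at most one parent, so that
`det = ∑ f, (weight of f) * det (1 - N_f)`, where `f` runs over all maps `V → Option V` and `N_f` is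
the matrix of `f`.

If the parent relation of `f` is well founded, then `1 - N_f` is triangular and has determinant `1`.
Otherwise the indicator function of the vertices with an infinite chain of ancestors lies in its
kernel, and the determinant is `0`. For the adjacency matrix of `G`, what is left are the
well-founded parent maps along edges of `G`.

Joining every vertex to its parent turns these into the rooted spanning forests of `G`; conversely,
a rooted forest determines the parent of a vertex as its neighbour closer to the root.
-/

open Relation Matrix

section Determinant

variable {n R : Type*} [Fintype n] [DecidableEq n] [CommRing R]

/-- A nontrivial permutation contributes `0`: a minimal point `i` that it moves would have the moved
point `σ⁻¹ i` below it if all the factors were nonzero. -/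
lemma det_eq_prod_diag_of_wellFounded {r : n → n → Prop} (hr : WellFounded r) {M : Matrix n n R}
    (hM : ∀ i j, i ≠ j → M i j ≠ 0 → r j i) : M.det = ∏ i, M i i := by
  rw [det_apply]
  refine (Finset.sum_eq_single 1 (fun σ _ hσ => ?_) (by simp)).trans (by simp)
  obtain ⟨k, hk⟩ : ∃ k, σ k ≠ k := by
    by_contra! h
    exact hσ (Equiv.ext h)
  obtain ⟨i, hi, hmin⟩ := hr.has_min {i | σ⁻¹ i ≠ i} ⟨σ k, by simpa using hk.symm⟩
  have hzero : M i (σ⁻¹ i) = 0 := by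
    by_contra h
    exact hmin (σ⁻¹ i) (fun h' => hi (σ⁻¹.injective h')) (hM i (σ⁻¹ i) (Ne.symm hi) h)
  rw [Finset.prod_eq_zero (Finset.mem_univ (σ⁻¹ i)) (by simpa using hzero), smul_zero]

lemma det_eq_zero_of_mulVec_eq_zero {M : Matrix n n R} {y : n → R} {i : n} (hMy : M *ᵥ y = 0)
    (hy : IsUnit (y i)) : M.det = 0 := by
  have h : M.det • y = 0 := by
    rw [← one_mulVec (M.det • y), mulVec_smul, ← smul_mulVec, ← adjugate_mul, ← mulVec_mulVec,
      hMy, mulVec_zero]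
  exact hy.mul_left_eq_zero.1 (congrFun h i)

end Determinant

/-- A candidate rooted forest on `V`, given by sending each vertex to its parent and each root to
`none`. Cyclic chains of parents are allowed; the map describes a forest when its parent relation
`ParentMap.Parent` is well founded. -/
abbrev ParentMap (V : Type*) := V → Option V

namespace ParentMap

variable {V : Type*}

/-- `f.Parent w v` says that `w` is the parent of `v`. The arguments are in this order so that a
well-founded parent relation is one without infinite chains of ancestors. -/
def Parent (f : ParentMap V) (w v : V) : Prop := f v = some w

lemma acc_parent_iff {f : ParentMap V} {v w : V} (h : f v = some w) :
    Acc f.Parent v ↔ Acc f.Parent w := by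
  refine ⟨fun hv => hv.inv h, fun hw => ⟨v, fun u hu => ?_⟩⟩
  rwa [Option.some.inj (hu.symm.trans h)]

section Matrix

variable (R : Type*) [CommRing R] [DecidableEq V]

/-- Row `v` of the matrix of a parent map with value `o` at `v`: it is `e_v` for a root and
`e_v - e_w` for a vertex with parent `w`. -/
def row (v : V) (o : Option V) : V → R := fun w =>
  (1 : Matrix V V R) v w - if o = some w then 1 else 0

/-- The matrix `1 - N`, where `N v w` is `1` if `w` is the parent of `v`, and `0` otherwise. -/
def matrix (f : ParentMap V) : Matrix V V R := fun v => row R v (f v)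

variable [Fintype V]

lemma det_matrix_of_wellFounded {f : ParentMap V} (hf : WellFounded f.Parent) :
    (f.matrix R).det = 1 := by
  rw [det_eq_prod_diag_of_wellFounded hf fun v w hvw hne => ?_]
  · refine Finset.prod_eq_one fun v _ => ?_
    have hv : f v ≠ some v := fun h => hf.irrefl.irrefl v h
    simp [matrix, row, hv]
  · by_contra hp
    have hp' : f v ≠ some w := hp
    simp [matrix, row, hvw, hp'] at hne

lemma matrix_mulVec_apply (f : ParentMap V) (y : V → R) (v : V) :
    (f.matrix R *ᵥ y) v = y v - (f v).elim 0 y := by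
  cases hv : f v <;> simp [matrix, row, mulVec, dotProduct, sub_mul, Matrix.one_apply, hv]

lemma det_matrix_of_not_wellFounded {f : ParentMap V} (hf : ¬ WellFounded f.Parent) :
    (f.matrix R).det = 0 := by
  classical
  obtain ⟨v₀, hv₀⟩ : ∃ v, ¬ Acc f.Parent v := by
    by_contra! h
    exact hf ⟨h⟩
  let y : V → R := fun v => if Acc f.Parent v then 0 else 1
  refine det_eq_zero_of_mulVec_eq_zero (y := y) (i := v₀) (funext fun v => ?_) (by simp [y, hv₀])
  rw [matrix_mulVec_apply]
  cases hv : f v with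
  | none =>
    have hacc : Acc f.Parent v := ⟨v, fun w hw => by simp [Parent, hv] at hw⟩
    simp [y, hacc]
  | some w => simp [y, acc_parent_iff hv]

end Matrix

end ParentMap

open Classical in
theorem det_diagonal_add_sum_sub_eq_sum_parentMap {V R : Type*} [Fintype V] [DecidableEq V]
    [CommRing R] (A : Matrix V V R) (x : V → R) :
    (diagonal (fun v => x v + ∑ w, A v w) - A).det =
      ∑ f : ParentMap V with WellFounded f.Parent, ∏ v, (f v).elim (x v) (A v) := by
  have hrow : diagonal (fun v => x v + ∑ w, A v w) - A =
      fun v => ∑ o : Option V, o.elim (x v) (A v) • ParentMap.row R v o := by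
    ext v w
    simp [Fintype.sum_option, ParentMap.row, Matrix.one_apply, diagonal_apply, mul_sub,
      Finset.sum_sub_distrib]
  calc (diagonal (fun v => x v + ∑ w, A v w) - A).det
      = ∑ f : ParentMap V, detRowAlternating.toMultilinearMap
          fun v => (f v).elim (x v) (A v) • ParentMap.row R v (f v) := by
        rw [hrow]
        exact detRowAlternating.toMultilinearMap.map_sum _
    _ = ∑ f : ParentMap V, (∏ v, (f v).elim (x v) (A v)) * (f.matrix R).det :=
        Finset.sum_congr rfl fun f _ => detRowAlternating.toMultilinearMap.map_smul_univ _ _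
    _ = ∑ f : ParentMap V with WellFounded f.Parent, ∏ v, (f v).elim (x v) (A v) := by
        rw [Finset.sum_filter]
        refine Finset.sum_congr rfl fun f _ => ?_
        split_ifs with hf
        · rw [ParentMap.det_matrix_of_wellFounded R hf, mul_one]
        · rw [ParentMap.det_matrix_of_not_wellFounded R hf, mul_zero]

/-- `F` is a forest and the set `R` of roots meets each connected component of `F` in exactly one
vertex. -/
def IsRootedForest {V : Type*} (F : SimpleGraph V) (R : Set V) : Prop :=
  F.IsAcyclic ∧ ∀ v, ∃! r, r ∈ R ∧ F.Reachable r v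

namespace ParentMap

variable {V : Type*} {f g : ParentMap V}

/-- The graph joining every vertex to its parent; a vertex that is its own parent gives no edge. -/
def graph (f : ParentMap V) : SimpleGraph V := SimpleGraph.fromRel f.Parent

lemma not_transGen_parent_self (hf : WellFounded f.Parent) (v : V) : ¬ TransGen f.Parent v v :=
  hf.transGen.irrefl.irrefl v

lemma graph_adj (hf : WellFounded f.Parent) {v w : V} :
    f.graph.Adj v w ↔ f v = some w ∨ f w = some v := by
  rw [graph, SimpleGraph.fromRel_adj, or_comm (a := f.Parent v w)]
  refine and_iff_right_of_imp ?_
  rintro h rfl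
  exact hf.irrefl.irrefl v (or_self_iff.1 h)

lemma graph_le_iff (hf : WellFounded f.Parent) {G : SimpleGraph V} :
    f.graph ≤ G ↔ ∀ v w, f v = some w → G.Adj v w := by
  refine ⟨fun h v w hvw => h ((graph_adj hf).2 (.inl hvw)), fun h v w hvw => ?_⟩
  rcases (graph_adj hf).1 hvw with hp | hp
  · exact h v w hp
  · exact (h w v hp).symm

/-- The edge to the parent of `v` is the only one leaving the set of descendants of `v`. -/
lemma reflTransGen_parent_of_reachable (hf : WellFounded f.Parent) {H : SimpleGraph V} {v w : V}
    (hH : H ≤ f.graph) (hv : ∀ u, f v = some u → ¬ H.Adj v u) (hvw : H.Reachable v w) :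
    ReflTransGen f.Parent v w := by
  rw [SimpleGraph.reachable_iff_reflTransGen] at hvw
  induction hvw with
  | refl => exact .refl
  | @tail a b _ hab ih =>
    rcases (graph_adj hf).1 (hH hab) with hp | hp
    · rcases ih.cases_tail with rfl | ⟨c, hvc, hca⟩
      · exact absurd hab (hv b hp)
      · rwa [Option.some.inj (hp.symm.trans hca)]
    · exact ih.tail hp

lemma isBridge_graph (hf : WellFounded f.Parent) {v w : V} (hvw : f v = some w) :
    f.graph.IsBridge s(v, w) := by
  rw [SimpleGraph.isBridge_iff]
  intro hreach
  have hdesc : ReflTransGen f.Parent v w := by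
    refine reflTransGen_parent_of_reachable hf (SimpleGraph.deleteEdges_le _)
      (fun u hu => ?_) hreach
    obtain rfl := Option.some.inj (hvw.symm.trans hu)
    simp
  exact not_transGen_parent_self hf v (.tail' hdesc hvw)

lemma isAcyclic_graph (hf : WellFounded f.Parent) : f.graph.IsAcyclic := by
  rw [SimpleGraph.isAcyclic_iff_forall_adj_isBridge]
  intro v w hvw
  rcases (graph_adj hf).1 hvw with hp | hp
  · exact isBridge_graph hf hp
  · exact Sym2.eq_swap ▸ isBridge_graph hf hp

lemma exists_root_reachable (hf : WellFounded f.Parent) (v : V) :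
    ∃ r, f r = none ∧ f.graph.Reachable r v := by
  induction v using hf.induction with
  | _ v ih =>
    cases hv : f v with
    | none => exact ⟨v, hv, .refl v⟩
    | some w =>
      obtain ⟨r, hr, hrw⟩ := ih w hv
      exact ⟨r, hr, hrw.trans ((graph_adj hf).2 (.inr hv)).reachable⟩

lemma root_eq_of_reachable (hf : WellFounded f.Parent) {r s : V} (hr : f r = none)
    (hs : f s = none) (hrs : f.graph.Reachable r s) : r = s := by
  have hdesc : ReflTransGen f.Parent r s :=
    reflTransGen_parent_of_reachable hf le_rfl (by simp [hr]) hrs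
  rcases hdesc.cases_tail with rfl | ⟨c, _, hc⟩
  · rfl
  · simp [Parent, hs] at hc

theorem isRootedForest_graph (hf : WellFounded f.Parent) :
    IsRootedForest f.graph {r | f r = none} := by
  refine ⟨isAcyclic_graph hf, fun v => ?_⟩
  obtain ⟨r, hr, hrv⟩ := exists_root_reachable hf v
  exact ⟨r, ⟨hr, hrv⟩, fun s hs => root_eq_of_reachable hf hs.1 hr (hs.2.trans hrv.symm)⟩

/-- If `f` and `g` agree at the parent `w` of `v` under `f`, then `v` is not the parent of `w` under
`g`, since `f` has no cycle of length two; so the edge between `v` and `w` makes `w` the parent of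
`v` under `g` too. -/
theorem eq_of_graph_eq (hf : WellFounded f.Parent) (hg : WellFounded g.Parent)
    (hgraph : f.graph = g.graph) (hroot : ∀ v, f v = none ↔ g v = none) : f = g := by
  funext v
  induction v using hf.induction with
  | _ v ih =>
    cases hv : f v with
    | none => exact ((hroot v).1 hv).symm
    | some w =>
      have hadj : g.graph.Adj v w := hgraph ▸ (graph_adj hf).2 (.inl hv)
      refine ((graph_adj hg).1 hadj).elim Eq.symm fun hgw => ?_
      have hfw : f w = some v := (ih w hv).trans hgw
      exact absurd (.tail (.single hv) hfw) (not_transGen_parent_self hf w)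

end ParentMap

section RootedForest

variable {V : Type*} {F : SimpleGraph V}

lemma exists_adj_dist_lt {v r : V} (h : F.Reachable v r) (hne : v ≠ r) :
    ∃ w, F.Adj v w ∧ F.dist w r < F.dist v r := by
  obtain ⟨p, hp⟩ := h.exists_walk_length_eq_dist
  cases p with
  | nil => exact absurd rfl hne
  | @cons _ w _ hvw q =>
    rw [SimpleGraph.Walk.length_cons] at hp
    exact ⟨w, hvw, by linarith [SimpleGraph.dist_le q]⟩

lemma IsRootedForest.exists_parentMap_le {R : Set V} (h : IsRootedForest F R) :
    ∃ f : ParentMap V, WellFounded f.Parent ∧ f.graph ≤ F ∧ ∀ v, f v = none ↔ v ∈ R := by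
  classical
  obtain ⟨-, hR⟩ := h
  choose root hroot hunique using hR
  have hroot_eq {v w : V} (hvw : F.Adj v w) : root v = root w :=
    hunique w _ ⟨(hroot v).1, (hroot v).2.trans hvw.reachable⟩
  have hcloser (v : V) (hv : v ∉ R) :
      ∃ w, F.Adj v w ∧ F.dist w (root w) < F.dist v (root v) := by
    obtain ⟨w, hvw, hlt⟩ :=
      exists_adj_dist_lt (hroot v).2.symm fun heq => hv (heq ▸ (hroot v).1)
    exact ⟨w, hvw, hroot_eq hvw ▸ hlt⟩
  choose! parent hadj hlt using hcloser
  let f : ParentMap V := fun v => if v ∈ R then none else some (parent v)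
  have hsome {v w : V} (hvw : f v = some w) : v ∉ R ∧ parent v = w := by simpa [f] using hvw
  have hf : WellFounded f.Parent := by
    refine Subrelation.wf (fun {w v} hp => ?_) (measure fun v => F.dist v (root v)).wf
    obtain ⟨hv, rfl⟩ := hsome hp
    exact hlt v hv
  refine ⟨f, hf, (ParentMap.graph_le_iff hf).2 fun v w hvw => ?_, fun v => by simp [f]⟩
  obtain ⟨hv, rfl⟩ := hsome hvw
  exact hadj v hv

lemma eq_of_le_of_isAcyclic_of_reachable_le {H : SimpleGraph V} (hle : H ≤ F)
    (hF : F.IsAcyclic) (hreach : F.Reachable ≤ H.Reachable) : H = F := by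
  have hmax := (SimpleGraph.maximal_isAcyclic_iff_reachable_eq hle (hF.anti hle)).2
    (le_antisymm (fun _ _ h => h.mono hle) hreach)
  exact le_antisymm hle (hmax.le_of_ge ⟨le_rfl, hF⟩ hle)

theorem IsRootedForest.exists_parentMap {R : Set V} (h : IsRootedForest F R) :
    ∃ f : ParentMap V, WellFounded f.Parent ∧ f.graph = F ∧ ∀ v, f v = none ↔ v ∈ R := by
  obtain ⟨f, hf, hle, hroots⟩ := h.exists_parentMap_le
  refine ⟨f, hf, eq_of_le_of_isAcyclic_of_reachable_le hle h.1 fun v w hvw => ?_, hroots⟩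
  obtain ⟨r, hr, hrv⟩ := ParentMap.exists_root_reachable hf v
  obtain ⟨s, hs, hsw⟩ := ParentMap.exists_root_reachable hf w
  have hrs : r = s := (h.2 w).unique
    ⟨(hroots r).1 hr, (hrv.mono hle).trans hvw⟩ ⟨(hroots s).1 hs, hsw.mono hle⟩
  exact hrv.symm.trans (hrs ▸ hsw)

end RootedForest

section LapMatrix

variable {V R : Type*} [Fintype V] [CommRing R]

open Classical in
lemma ParentMap.prod_elim_adjMatrix {f : ParentMap V} (hf : WellFounded f.Parent)
    (G : SimpleGraph V) [DecidableRel G.Adj] (x : V → R) :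
    ∏ v, (f v).elim (x v) (G.adjMatrix R v) =
      if f.graph ≤ G then ∏ r with f r = none, x r else 0 := by
  split_ifs with hG
  · rw [Finset.prod_filter]
    refine Finset.prod_congr rfl fun v _ => ?_
    cases hv : f v with
    | none => simp
    | some w => simp [(graph_le_iff hf).1 hG v w hv]
  · rw [graph_le_iff hf] at hG
    push Not at hG
    obtain ⟨v, w, hvw, hadj⟩ := hG
    exact Finset.prod_eq_zero (Finset.mem_univ v) (by simp [hvw, hadj])

variable [DecidableEq V]

open Classical in
lemma det_lapMatrix_add_diagonal_eq_sum_parentMap (G : SimpleGraph V) [DecidableRel G.Adj]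
    (x : V → R) :
    (G.lapMatrix R + diagonal x).det =
      ∑ f : ParentMap V with WellFounded f.Parent ∧ f.graph ≤ G, ∏ r with f r = none, x r := by
  have hmatrix : G.lapMatrix R + diagonal x =
      diagonal (fun v => x v + ∑ w, G.adjMatrix R v w) - G.adjMatrix R := by
    have hdegree (v : V) : ∑ w, G.adjMatrix R v w = G.degree v := by
      simp [SimpleGraph.adjMatrix_apply, ← G.card_neighborFinset_eq_degree,
        G.neighborFinset_eq_filter]
    simp only [SimpleGraph.lapMatrix, SimpleGraph.degMatrix, hdegree, sub_add_eq_add_sub,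
      diagonal_add, add_comm (x _)]
  rw [hmatrix, det_diagonal_add_sum_sub_eq_sum_parentMap, ← Finset.filter_filter,
    Finset.sum_filter (fun f : ParentMap V => f.graph ≤ G)]
  exact Finset.sum_congr rfl fun f hf =>
    ParentMap.prod_elim_adjMatrix (Finset.mem_filter.1 hf).2 G x

open Classical in
theorem chebotarev_shamis_forest_general (G : SimpleGraph V) [DecidableRel G.Adj] (x : V → R) :
    (G.lapMatrix R + diagonal x).det =
      ∑ p : SimpleGraph V × Finset V with p.1 ≤ G ∧ IsRootedForest p.1 p.2, ∏ r ∈ p.2, x r := by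
  rw [det_lapMatrix_add_diagonal_eq_sum_parentMap]
  refine Finset.sum_nbij (fun f => (f.graph, Finset.univ.filter (f · = none)))
    ?maps ?injective ?surjective fun _ _ => rfl
  case maps =>
    intro f hf
    obtain ⟨hf, hG⟩ := (Finset.mem_filter_univ f).1 hf
    simpa [hG] using ParentMap.isRootedForest_graph hf
  case injective =>
    intro f hf g hg hfg
    simp only [Finset.coe_filter_univ, Set.mem_ofPred_eq] at hf hg
    obtain ⟨hgraph, hroots⟩ := Prod.ext_iff.1 hfg
    exact ParentMap.eq_of_graph_eq hf.1 hg.1 hgraph fun v => by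
      simpa using Finset.ext_iff.1 hroots v
  case surjective =>
    rintro ⟨F, S⟩ hFS
    simp only [Finset.coe_filter_univ, Set.mem_ofPred_eq] at hFS
    obtain ⟨f, hf, rfl, hroots⟩ := hFS.2.exists_parentMap
    exact ⟨f, by simp [hf, hFS.1], by ext <;> simp [hroots]⟩

end LapMatrix

/-- **Chebotarev–Shamis forest theorem**: `det(K + 1)`, where `K` is the
Kirchhoff Laplacian of a finite simple graph `G`, equals the number of rooted
spanning forests of `G`, i.e. pairs `(F, R)` of an acyclic subgraph `F` of `G`
on the full vertex set together with a set `R` of vertices containing exactly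
one vertex from each connected component of `F`. -/
theorem chebotarev_shamis_forest {V : Type} [Fintype V] [DecidableEq V]
    (G : SimpleGraph V) [DecidableRel G.Adj] :
    (G.lapMatrix ℤ + 1).det
      = Nat.card {p : SimpleGraph V × Finset V //
          p.1 ≤ G ∧ p.1.IsAcyclic ∧ ∀ v : V, ∃! r : V, r ∈ p.2 ∧ p.1.Reachable r v} := by
  classical
  simpa [IsRootedForest, Fintype.card_subtype] using
    chebotarev_shamis_forest_general G (1 : V → ℤ)
end

section
/- Contractible graphs have Euler characteristic 1: if a finite simple graph G is contractible, then χ(G) = Σ_c (-1)^(|c|-1) = 1, where the sum is over all nonempty cliques c of G. -/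
/-- Contractibility of the induced subgraph of a finite simple graph `G` on a
finite vertex set `A`, defined inductively: a single vertex is contractible,
and `A` is contractible if there is a vertex `x ∈ A` such that both the unit
sphere of `x` in `A` (the neighbors of `x` inside `A`) and `A - x` are
contractible. -/
inductive GraphContractible {α : Type} [DecidableEq α] (G : SimpleGraph α)
    [DecidableRel G.Adj] : Finset α → Prop
  | single (x : α) : GraphContractible G {x}
  | step (A : Finset α) (x : α) (hx : x ∈ A)
      (hS : GraphContractible G (A.filter fun y => G.Adj x y))
      (hA : GraphContractible G (A.erase x)) : GraphContractible G A

/-!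
Removing a vertex `x` from `A` removes exactly the cliques `insert x c` with `c` a clique, possibly
empty, of the unit sphere `S(x)`. Since adding `x` flips the sign of a clique, and since counting
the empty clique turns the alternating sum into `1 - χ`, this gives
`χ(A) = χ(A - x) + (1 - χ(S(x)))`. If `S(x)` and `A - x` both have Euler characteristic `1`, so
does `A`.
-/

section Cliques

variable {α : Type*} [DecidableEq α] (G : SimpleGraph α) [DecidableRel G.Adj]
  {A : Finset α} {x : α}

/-- The unit sphere `S(x)` of `x` in the subgraph of `G` induced on `A`, as a vertex set. It is
reducible because `GraphContractible` spells it out. -/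
abbrev unitSphere (A : Finset α) (x : α) : Finset α :=
  {y ∈ A | G.Adj x y}

/-- The cliques of `G` with all vertices in `A`. The empty clique is included, so that the cliques
containing a vertex correspond to all cliques of its unit sphere. -/
def cliquesIn (A : Finset α) : Finset (Finset α) :=
  {c ∈ A.powerset | G.IsClique (c : Set α)}

/-- The Euler characteristic of the Whitney complex of the subgraph of `G` induced on `A`, whose
simplices are the nonempty cliques. -/
def eulerChar (A : Finset α) : ℤ :=
  ∑ c ∈ cliquesIn G A with c.Nonempty, (-1) ^ (c.card - 1)

variable {G} in
theorem mem_cliquesIn {c : Finset α} :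
    c ∈ cliquesIn G A ↔ c ⊆ A ∧ G.IsClique (c : Set α) := by
  simp [cliquesIn]

theorem filter_notMem_cliquesIn (A : Finset α) (x : α) :
    {c ∈ cliquesIn G A | x ∉ c} = cliquesIn G (A.erase x) := by
  ext c
  simp only [Finset.mem_filter, mem_cliquesIn, Finset.subset_erase]
  tauto

theorem filter_mem_cliquesIn (hx : x ∈ A) :
    {c ∈ cliquesIn G A | x ∈ c} = (cliquesIn G (unitSphere G A x)).image (insert x) := by
  ext c
  simp only [Finset.mem_filter, Finset.mem_image, mem_cliquesIn]
  constructor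
  · rintro ⟨⟨hcA, hc⟩, hxc⟩
    refine ⟨c.erase x, ⟨fun y hy => ?_, hc.subset (by simp)⟩, Finset.insert_erase hxc⟩
    obtain ⟨hyx, hyc⟩ := Finset.mem_erase.1 hy
    exact Finset.mem_filter.2 ⟨hcA hyc, hc hxc hyc hyx.symm⟩
  · rintro ⟨t, ⟨htS, ht⟩, rfl⟩
    have htA : t ⊆ A := htS.trans (Finset.filter_subset _ A)
    refine ⟨⟨Finset.insert_subset hx htA, ?_⟩, Finset.mem_insert_self x t⟩
    rw [Finset.coe_insert]
    exact ht.insert fun y hy _ => (Finset.mem_filter.1 (htS hy)).2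

variable {G} in
theorem notMem_of_mem_cliquesIn_unitSphere {c : Finset α}
    (hc : c ∈ cliquesIn G (unitSphere G A x)) : x ∉ c := fun hxc =>
  G.irrefl (Finset.mem_filter.1 ((mem_cliquesIn.1 hc).1 hxc)).2

theorem sum_cliquesIn_eq_add_sum_unitSphere {M : Type*} [AddCommMonoid M] (f : Finset α → M)
    (hx : x ∈ A) :
    ∑ c ∈ cliquesIn G A, f c =
      ∑ c ∈ cliquesIn G (A.erase x), f c +
        ∑ c ∈ cliquesIn G (unitSphere G A x), f (insert x c) := by
  have hinj : Set.InjOn (insert x) (cliquesIn G (unitSphere G A x) : Set (Finset α)) :=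
    fun s hs t ht hst => by
      rw [← Finset.erase_insert (notMem_of_mem_cliquesIn_unitSphere hs), hst,
        Finset.erase_insert (notMem_of_mem_cliquesIn_unitSphere ht)]
  rw [← Finset.sum_filter_not_add_sum_filter _ (x ∈ ·), filter_notMem_cliquesIn,
    filter_mem_cliquesIn G hx, Finset.sum_image hinj]

theorem sum_cliquesIn_neg_one_pow_card (A : Finset α) :
    ∑ c ∈ cliquesIn G A, (-1 : ℤ) ^ c.card = 1 - eulerChar G A := by
  have hempty : {c ∈ cliquesIn G A | ¬c.Nonempty} = {∅} := by
    ext c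
    simp +contextual [mem_cliquesIn, iff_def]
  have hsign : ∀ c ∈ (cliquesIn G A).filter Finset.Nonempty,
      (-1 : ℤ) ^ c.card = -(-1) ^ (c.card - 1) := fun c hc => by
    rw [← mul_pow_sub_one (Finset.mem_filter.1 hc).2.card_pos.ne', neg_one_mul]
  rw [← Finset.sum_filter_not_add_sum_filter _ Finset.Nonempty, hempty, Finset.sum_singleton,
    Finset.card_empty, pow_zero, Finset.sum_congr rfl hsign, Finset.sum_neg_distrib, eulerChar,
    sub_eq_add_neg]

theorem eulerChar_eq_eulerChar_erase_add (hx : x ∈ A) :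
    eulerChar G A = eulerChar G (A.erase x) + (1 - eulerChar G (unitSphere G A x)) := by
  have hcone : ∑ c ∈ cliquesIn G (unitSphere G A x), (-1 : ℤ) ^ (insert x c).card =
      -(1 - eulerChar G (unitSphere G A x)) := by
    rw [← sum_cliquesIn_neg_one_pow_card, ← Finset.sum_neg_distrib]
    refine Finset.sum_congr rfl fun c hc => ?_
    rw [Finset.card_insert_of_notMem (notMem_of_mem_cliquesIn_unitSphere hc), pow_succ, mul_neg_one]
  have hsum := sum_cliquesIn_eq_add_sum_unitSphere G (fun c => (-1 : ℤ) ^ c.card) hx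
  rw [hcone, sum_cliquesIn_neg_one_pow_card, sum_cliquesIn_neg_one_pow_card] at hsum
  linarith

theorem eulerChar_singleton (x : α) : eulerChar G {x} = 1 := by
  rw [eulerChar_eq_eulerChar_erase_add G (Finset.mem_singleton_self x)]
  -- `{x} - x` and the unit sphere are both empty, so their contributions cancel.
  simp [Finset.filter_singleton]

end Cliques

theorem contractible_euler_characteristic_general {α : Type} [DecidableEq α]
    {G : SimpleGraph α} [DecidableRel G.Adj] {A : Finset α} (h : GraphContractible G A) :
    eulerChar G A = 1 := by
  induction h with
  | single x => exact eulerChar_singleton G x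
  | step A x hx _ _ ihS ihA => rw [eulerChar_eq_eulerChar_erase_add G hx, ihS, ihA]; norm_num

open scoped Classical in
/-- **Contractible graphs have Euler characteristic 1**: if a finite simple
graph is contractible then the Euler characteristic of its Whitney complex
(the sum of `(-1)^{|c|-1}` over all nonempty cliques `c`) equals `1`. -/
theorem contractible_euler_characteristic {α : Type} [DecidableEq α] [Fintype α]
    (G : SimpleGraph α) [DecidableRel G.Adj]
    (h : GraphContractible G Finset.univ) :
    ∑ c ∈ (Finset.univ : Finset α).powerset.filter
        (fun c : Finset α => c.Nonempty ∧ G.IsClique (c : Set α)),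
      (-1 : ℤ) ^ (c.card - 1) = 1 := by
  simpa only [eulerChar, cliquesIn, Finset.filter_filter, and_comm] using
    contractible_euler_characteristic_general h
end
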